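/- arXiv:2204.07785 — 5 statements merged into one kernel-verified Lean document; each statement's English description precedes it below -/
import Mathlib

section
/- There exists δ > 0 such that for all real u, v, w with |u|, |v|, |w| < δ, the series ∑_{k ≥ n+s, n ≥ s ≥ 1} G_0(k,n,s) u^{k−n−s} v^{n−s} w^{s−1} converges absolutely and equals (1/(1−u)) · ₃F₂(α, β, 1; (3−u)/2, 3/2; 1), where α and β are the two (possibly complex) roots of the quadratic X² − (1 − u/2 + v/2)X + (1 − u + v − uv + w)/4 = 0 (i.e. α + β = 1 − u/2 + v/2 and αβ = (1 − u + v − uv + w)/4). -/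
open scoped BigOperators

/-- The multiple `t`-value of an index `K = (k₁, …, kₙ)` (a list of positive integers):
`t(K) = ∑_{m₁ > ⋯ > mₙ > 0, all mᵢ odd} 1 / (m₁^{k₁} ⋯ mₙ^{kₙ})`. -/
noncomputable def multT (K : List ℕ) : ℝ :=
  ∑' m : Fin K.length → ℕ,
    if (∀ i, Odd (m i)) ∧ (∀ i j : Fin K.length, i < j → m j < m i) then
      ∏ i, ((m i : ℝ) ^ K.get i)⁻¹
    else 0

/-- The multiple `t`-star value of an index `K = (k₁, …, kₙ)`:
`t*(K) = ∑_{m₁ ≥ ⋯ ≥ mₙ > 0, all mᵢ odd} 1 / (m₁^{k₁} ⋯ mₙ^{kₙ})`. -/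
noncomputable def multTStar (K : List ℕ) : ℝ :=
  ∑' m : Fin K.length → ℕ,
    if (∀ i, Odd (m i)) ∧ (∀ i j : Fin K.length, i < j → m j ≤ m i) then
      ∏ i, ((m i : ℝ) ^ K.get i)⁻¹
    else 0

/-- An index (list of positive integers) is admissible if its first entry is `> 1`. -/
def Admissible (K : List ℕ) : Prop := (∀ i ∈ K, 1 ≤ i) ∧ 2 ≤ K.headI

instance : DecidablePred Admissible := fun K =>
  inferInstanceAs (Decidable ((∀ i ∈ K, 1 ≤ i) ∧ 2 ≤ K.headI))

/-- `G0h k n s` is the sum of multiple `t`-values over all admissible indices of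
weight `k`, depth `n` and height `s`. -/
noncomputable def G0h (k n s : ℕ) : ℝ :=
  ∑' K : List ℕ,
    if Admissible K ∧ K.sum = k ∧ K.length = n ∧
        K.countP (fun i => decide (2 ≤ i)) = s then
      multT K
    else 0

/-- `G0hStar k n s` is the sum of multiple `t`-star values over all admissible indices of
weight `k`, depth `n` and height `s`. -/
noncomputable def G0hStar (k n s : ℕ) : ℝ :=
  ∑' K : List ℕ,
    if Admissible K ∧ K.sum = k ∧ K.length = n ∧
        K.countP (fun i => decide (2 ≤ i)) = s then
      multTStar K
    else 0

/-- `G0d k n` is the sum of multiple `t`-values over all admissible indices of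
weight `k` and depth `n`. -/
noncomputable def G0d (k n : ℕ) : ℝ :=
  ∑' K : List ℕ,
    if Admissible K ∧ K.sum = k ∧ K.length = n then multT K else 0

/-- `G0dStar k n` is the sum of multiple `t`-star values over all admissible indices of
weight `k` and depth `n`. -/
noncomputable def G0dStar (k n : ℕ) : ℝ :=
  ∑' K : List ℕ,
    if Admissible K ∧ K.sum = k ∧ K.length = n then multTStar K else 0

/-- The single `t`-value `t(n) = ∑_{m odd, m > 0} 1 / m^n`. -/
noncomputable def tval (n : ℕ) : ℝ := ∑' m : ℕ, 1 / (2 * (m : ℝ) + 1) ^ n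

/-- The ascending Pochhammer symbol `(a)ₙ = a (a+1) ⋯ (a+n-1)`. -/
noncomputable def poch (a : ℂ) (n : ℕ) : ℂ := ∏ i ∈ Finset.range n, (a + i)

/-- The generalized hypergeometric function `₃F₂(a, b, c; d, e; z)`. -/
noncomputable def hyp3F2 (a b c d e z : ℂ) : ℂ :=
  ∑' n : ℕ, poch a n * poch b n * poch c n /
      ((n.factorial : ℂ) * poch d n * poch e n) * z ^ n

/-- The generalized hypergeometric function with upper parameters `as` and lower
parameters `bs`. -/
noncomputable def hypF (as bs : List ℂ) (z : ℂ) : ℂ :=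
  ∑' n : ℕ, (as.map fun a => poch a n).prod /
      ((n.factorial : ℂ) * (bs.map fun b => poch b n).prod) * z ^ n

/-- The one-variable multiple polylogarithm
`L_K(z) = ∑_{m₁ > ⋯ > mₙ > 0, all mᵢ odd} z^{m₁} / (m₁^{k₁} ⋯ mₙ^{kₙ})`. -/
noncomputable def Lt (K : List ℕ) (z : ℝ) : ℝ :=
  ∑' m : Fin K.length → ℕ,
    if h : (∀ i, Odd (m i)) ∧ (∀ i j : Fin K.length, i < j → m j < m i) ∧
        0 < K.length then
      z ^ (m ⟨0, h.2.2⟩) * ∏ i, ((m i : ℝ) ^ K.get i)⁻¹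
    else 0

/-- The one-variable star multiple polylogarithm
`L*_K(z) = ∑_{m₁ ≥ ⋯ ≥ mₙ > 0, all mᵢ odd} z^{m₁} / (m₁^{k₁} ⋯ mₙ^{kₙ})`. -/
noncomputable def LtStar (K : List ℕ) (z : ℝ) : ℝ :=
  ∑' m : Fin K.length → ℕ,
    if h : (∀ i, Odd (m i)) ∧ (∀ i j : Fin K.length, i < j → m j ≤ m i) ∧
        0 < K.length then
      z ^ (m ⟨0, h.2.2⟩) * ∏ i, ((m i : ℝ) ^ K.get i)⁻¹
    else 0

/-- `G0hz k n s z` is the sum of `L_K(z)` over all admissible indices `K` of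
weight `k`, depth `n` and height `s`. -/
noncomputable def G0hz (k n s : ℕ) (z : ℝ) : ℝ :=
  ∑' K : List ℕ,
    if Admissible K ∧ K.sum = k ∧ K.length = n ∧
        K.countP (fun i => decide (2 ≤ i)) = s then
      Lt K z
    else 0

/-- `G0hzStar k n s z` is the sum of `L*_K(z)` over all admissible indices `K` of
weight `k`, depth `n` and height `s`. -/
noncomputable def G0hzStar (k n s : ℕ) (z : ℝ) : ℝ :=
  ∑' K : List ℕ,
    if Admissible K ∧ K.sum = k ∧ K.length = n ∧
        K.countP (fun i => decide (2 ≤ i)) = s then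
      LtStar K z
    else 0

theorem hs_congr {A : Type} {f g : A → ℝ} {s t : ℝ} (hf : HasSum f s) (h : ∀ x, g x = f x)
    (e : t = s) : HasSum g t := by
  have : g = f := funext h
  rw [this, e]; exact hf

theorem hasSum_prod_nn {A B : Type} (f : A × B → ℝ) (g : A → ℝ) (s : ℝ) (h0 : ∀ x, 0 ≤ f x)
    (hf : ∀ a, HasSum (fun b => f (a, b)) (g a)) (hg : HasSum g s) : HasSum f s := by
  have hs : Summable f := by
    rw [summable_prod_of_nonneg h0]
    refine ⟨fun a => (hf a).summable, ?_⟩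
    have : (fun a => ∑' b, f (a, b)) = g := funext fun a => (hf a).tsum_eq
    rw [this]; exact hg.summable
  have := hs.hasSum.prod_fiberwise hf
  rw [hg.unique this]
  exact hs.hasSum

/-- truncated sums -/
noncomputable def TT : List ℕ → ℕ → ℝ
  | [], _ => 1
  | k :: K, N => ∑ i ∈ Finset.range N, ((2 * (i : ℝ) + 1) ^ k)⁻¹ * TT K i

theorem TT_nonneg (K : List ℕ) : ∀ N, 0 ≤ TT K N := by
  induction K with
  | nil => intro N; simp [TT]
  | cons k K ih =>
    intro N
    simp only [TT]
    exact Finset.sum_nonneg fun i _ => mul_nonneg (by positivity) (ih i)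

open Classical in
theorem cons_hasSum (k : ℕ) (K : List ℕ) (Q : ℕ → Prop) [DecidablePred Q] (s : ℝ)
    (ih : ∀ N, HasSum (fun m : Fin K.length → ℕ =>
      if (∀ i, Odd (m i)) ∧ (∀ i j : Fin K.length, i < j → m j < m i) ∧ (∀ i, m i < 2 * N + 1) then
        ∏ i, ((m i : ℝ) ^ K.get i)⁻¹ else 0) (TT K N))
    (h : HasSum (fun i : ℕ => if Q (2 * i + 1) then ((2 * (i : ℝ) + 1) ^ k)⁻¹ * TT K i else 0) s) :
    HasSum (fun m : Fin (K.length + 1) → ℕ =>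
      if (∀ i, Odd (m i)) ∧ (∀ i j : Fin (K.length + 1), i < j → m j < m i) ∧ Q (m 0) then
        ∏ i : Fin (K.length + 1), ((m i : ℝ) ^ (k :: K).get i)⁻¹ else 0) s := by
  rw [← (Fin.consEquiv (fun _ : Fin (K.length + 1) => ℕ)).hasSum_iff]
  refine hasSum_prod_nn _ (fun m0 : ℕ => if Odd m0 ∧ Q m0 then
    ((m0 : ℝ) ^ k)⁻¹ * TT K ((m0 - 1) / 2) else 0) s ?_ ?_ ?_
  · intro x
    simp only [Function.comp]
    split_ifs
    · positivity
    · exact le_rfl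
  · intro m0
    by_cases hm : Odd m0 ∧ Q m0
    · rw [if_pos hm]
      have := (ih ((m0 - 1) / 2)).mul_left (((m0 : ℝ) ^ k)⁻¹)
      refine hs_congr this (fun m => ?_) rfl
      simp only [Function.comp, Fin.consEquiv_apply]
      have hm2 : 2 * ((m0 - 1) / 2) + 1 = m0 := by
        obtain ⟨r, hr⟩ := hm.1
        omega
      rw [hm2, mul_ite, mul_zero, Fin.prod_univ_succ]
      refine if_congr ?_ ?_ rfl
      · constructor
        · rintro ⟨h1, h2, h3⟩
          refine ⟨fun i => by simpa using h1 i.succ, fun i j hij => ?_, fun i => ?_⟩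
          · simpa using h2 i.succ j.succ (by simpa using hij)
          · simpa using h2 0 i.succ (Fin.succ_pos i)
        · rintro ⟨h1, h2, h3⟩
          refine ⟨fun i => ?_, fun i j hij => ?_, by simpa using hm.2⟩
          · refine Fin.cases ?_ (fun i => ?_) i
            · simpa using hm.1
            · simpa using h1 i
          · induction j using Fin.cases with
            | zero => exact absurd hij (Fin.not_lt_zero i)
            | succ j =>
              induction i using Fin.cases with
              | zero => simpa using h3 j
              | succ i => simpa using h2 i j (by simpa using hij)
      · simp
    · rw [if_neg hm]
      convert hasSum_zero with m
      simp only [Function.comp, Fin.consEquiv_apply]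
      rw [if_neg]
      rintro ⟨h1, h2, h3⟩
      exact hm ⟨by simpa using h1 0, by simpa using h3⟩
  · have inj : Function.Injective (fun i : ℕ => 2 * i + 1) := by
      intro a b hab; simpa using hab
    rw [← inj.hasSum_iff]
    · convert h using 2 with i
      simp
    · intro x hx
      rw [if_neg]
      rintro ⟨⟨r, hr⟩, _⟩
      exact hx ⟨r, hr.symm⟩

open Classical in
theorem TT_hasSum (K : List ℕ) : ∀ N, HasSum (fun m : Fin K.length → ℕ =>
      if (∀ i, Odd (m i)) ∧ (∀ i j : Fin K.length, i < j → m j < m i) ∧ (∀ i, m i < 2 * N + 1) then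
        ∏ i, ((m i : ℝ) ^ K.get i)⁻¹ else 0) (TT K N) := by
  induction K with
  | nil =>
    intro N
    have : IsEmpty (Fin ([] : List ℕ).length) := inferInstanceAs (IsEmpty (Fin 0))
    have := hasSum_unique (fun m : Fin ([] : List ℕ).length → ℕ =>
      if (∀ i, Odd (m i)) ∧ (∀ i j : Fin ([] : List ℕ).length, i < j → m j < m i) ∧ (∀ i, m i < 2 * N + 1) then
        ∏ i, ((m i : ℝ) ^ ([] : List ℕ).get i)⁻¹ else 0)
    convert this using 1
    have e : ∀ P : Fin ([] : List ℕ).length → Prop, ∀ i, P i := fun P i => i.elim0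
    rw [if_pos ⟨e _, e _, e _⟩]
    exact (Fin.prod_univ_zero _).symm
  | cons k K ih =>
    intro N
    have := cons_hasSum k K (fun x => x < 2 * N + 1) (TT (k :: K) N) ih ?_
    · refine hs_congr this (fun m => ?_) rfl
      refine ite_congr (propext ?_) (fun _ => rfl) (fun _ => rfl)
      constructor
      · rintro ⟨h1, h2, h3⟩
        exact ⟨h1, h2, h3 ⟨0, Nat.succ_pos _⟩⟩
      · rintro ⟨h1, h2, h3⟩
        refine ⟨h1, h2, fun i => ?_⟩
        by_cases h0 : i = ⟨0, Nat.succ_pos _⟩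
        · rw [h0]; exact h3
        · exact (h2 ⟨0, Nat.succ_pos _⟩ i (Fin.pos_iff_ne_zero.2 h0)).trans h3
    · simp only [TT]
      have h2 := hasSum_sum_of_ne_finset_zero (L := SummationFilter.unconditional ℕ) (s := Finset.range N) (f := fun i : ℕ => if 2 * i + 1 < 2 * N + 1 then ((2 * (i : ℝ) + 1) ^ k)⁻¹ * TT K i else 0) ?_
      · convert h2 using 1
        refine Finset.sum_congr rfl fun i hi => ?_
        rw [if_pos]
        have := Finset.mem_range.1 hi
        omega
      · intro b hb
        rw [if_neg]
        simp at hb; omega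

theorem multT_cons (k : ℕ) (K : List ℕ) 
    (h : Summable (fun i : ℕ => ((2 * (i : ℝ) + 1) ^ k)⁻¹ * TT K i)) :
    HasSum (fun i : ℕ => ((2 * (i : ℝ) + 1) ^ k)⁻¹ * TT K i) (multT (k :: K)) := by
  have := cons_hasSum k K (fun _ => True) _ (TT_hasSum K) (by simpa using h.hasSum)
  have h2 := this.tsum_eq
  convert h.hasSum
  rw [← h2]
  unfold multT
  simp only [and_true]
  refine tsum_congr fun m => ?_
  congr

theorem multT_nonneg (K : List ℕ) : 0 ≤ multT K := by
  unfold multT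
  refine tsum_nonneg fun m => ?_
  split_ifs
  · positivity
  · exact le_rfl

/-- weight of a non-leading entry -/
noncomputable def wt (u v w : ℝ) (k : ℕ) : ℝ :=
  if k = 0 then 0 else if k = 1 then v else w * u ^ (k - 2)

/-- weight of the leading entry -/
noncomputable def fw (u : ℝ) (k : ℕ) : ℝ := if k < 2 then 0 else u ^ (k - 2)

/-- weight of a tail -/
noncomputable def WW (u v w : ℝ) (K : List ℕ) : ℝ := (K.map (wt u v w)).prod

/-- entry sum -/
noncomputable def cc (u v w : ℝ) (i : ℕ) : ℝ :=
  v / (2 * i + 1) + w / ((2 * i + 1) * (2 * i + 1 - u))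

/-- partial product -/
noncomputable def PP (u v w : ℝ) (i : ℕ) : ℝ := ∏ j ∈ Finset.range i, (1 + cc u v w j)

theorem fw_hasSum (u : ℝ) (hu : |u| < 1 / 4) (i : ℕ) :
    HasSum (fun k => fw u k * ((2 * (i : ℝ) + 1) ^ k)⁻¹)
      (1 / ((2 * i + 1) * (2 * i + 1 - u))) := by
  rw [← sub_zero (1 / ((2 * (i : ℝ) + 1) * (2 * i + 1 - u)))]
  have hi : (0 : ℝ) ≤ i := Nat.cast_nonneg i
  have hu' := abs_lt.1 hu
  have h1 : |u / (2 * i + 1)| < 1 := by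
    rw [abs_div, div_lt_one (by positivity), abs_of_nonneg (by positivity : (0 : ℝ) ≤ 2 * i + 1)]
    linarith
  have h := (hasSum_geometric_of_abs_lt_one h1).mul_left (((2 * (i : ℝ) + 1) ^ 2)⁻¹)
  have h3 : (2 * (i : ℝ) + 1 - u) ≠ 0 := by linarith
  have h4 : (2 * (i : ℝ) + 1) ≠ 0 := by positivity
  have h2 := (hasSum_nat_add_iff (f := fun k => fw u k * ((2 * (i : ℝ) + 1) ^ k)⁻¹)
    (g := 1 / ((2 * (i : ℝ) + 1) * (2 * i + 1 - u))) 2).1 ?_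
  · simpa [Finset.sum_range_succ, fw] using h2
  · refine hs_congr h ?_ ?_
    · intro n
      simp only [fw]
      rw [if_neg (by omega), div_pow, pow_add]
      simp only [Nat.add_sub_cancel]
      field_simp
    · have : 1 - u / (2 * (i : ℝ) + 1) = (2 * i + 1 - u) / (2 * i + 1) := by field_simp
      rw [this]
      field_simp

theorem wt_hasSum (u v w : ℝ) (hu : |u| < 1 / 4) (i : ℕ) :
    HasSum (fun k => wt u v w k * ((2 * (i : ℝ) + 1) ^ k)⁻¹) (cc u v w i) := by
  have h1 := (fw_hasSum u hu i).mul_left w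
  have h2 : HasSum (fun k : ℕ => if k = 1 then v / (2 * (i : ℝ) + 1) else 0) (v / (2 * i + 1)) :=
    hasSum_ite_eq 1 _
  have := h2.add h1
  convert this using 1
  · funext k
    rcases k with _ | _ | k
    · simp [wt, fw]
    · simp [wt, fw, div_eq_mul_inv]
    · simp [wt, fw]; ring
  · simp only [cc]; ring

theorem hasSum_mul' {A B : Type} {f : A → ℝ} {g : B → ℝ} {s t : ℝ} (hf : HasSum f s)
    (hg : HasSum g t) : HasSum (fun x : A × B => f x.1 * g x.2) (s * t) :=
  hf.mul hg (summable_mul_of_summable_norm hf.summable.norm hg.summable.norm)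

theorem cons_inj : Function.Injective (fun x : ℕ × List ℕ => x.1 :: x.2) := by
  rintro ⟨a, b⟩ ⟨c, d⟩ h
  simpa using h

theorem list_hasSum (f : List ℕ → ℝ) (h0 : f [] = 0) (s : ℝ)
    (h : HasSum (fun x : ℕ × List ℕ => f (x.1 :: x.2)) s) : HasSum f s := by
  rw [← cons_inj.hasSum_iff]
  · exact h
  · intro K hK
    cases K with
    | nil => exact h0
    | cons k K => exact absurd ⟨(k, K), rfl⟩ hK

theorem WT_hasSum (u v w : ℝ) (hu : |u| < 1 / 4) (i : ℕ) :
    HasSum (fun K => WW u v w K * TT K i) (PP u v w i) := by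
  induction i with
  | zero =>
    have := hasSum_single (f := fun K => WW u v w K * TT K 0) [] ?_
    · simpa [WW, TT, PP] using this
    · intro K hK
      cases K with
      | nil => exact absurd rfl hK
      | cons k K => simp [TT]
  | succ i ih =>
    have h1 := hasSum_mul' (wt_hasSum u v w hu i) ih
    have h2 : HasSum (fun K => WW u v w K * (TT K (i + 1) - TT K i)) (cc u v w i * PP u v w i) := by
      refine list_hasSum _ (by simp [TT]) _ ?_
      convert h1 using 2 with x
      simp only [WW, TT, Finset.sum_range_succ, List.map_cons, List.prod_cons]
      ring
    convert ih.add h2 using 1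
    · funext K; ring
    · simp only [PP, Finset.prod_range_succ]; ring

theorem cc_abs (u v w : ℝ) (hu : |u| < 1 / 4) (hv : |v| < 1 / 4) (hw : |w| < 1 / 4) (i : ℕ) :
    |cc u v w i| ≤ 1 / (2 * i + 1) := by
  have hi : (0 : ℝ) ≤ i := Nat.cast_nonneg i
  have hu' := abs_lt.1 hu
  have h3 : (3 / 4 : ℝ) ≤ (2 * (i : ℝ) + 1 - u) := by linarith
  have h4 : 0 < (2 * (i : ℝ) + 1) := by positivity
  have : cc u v w i = (v + w / (2 * i + 1 - u)) / (2 * i + 1) := by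
    simp only [cc]; field_simp
  rw [this, abs_div, abs_of_pos h4]
  gcongr
  refine (abs_add_le _ _).trans ?_
  have : |w / (2 * i + 1 - u)| ≤ 1 / 2 := by
    rw [abs_div, abs_of_pos (by linarith : (0 : ℝ) < 2 * i + 1 - u), div_le_iff₀ (by linarith)]
    linarith
  linarith

theorem PP_abs (u v w : ℝ) (hu : |u| < 1 / 4) (hv : |v| < 1 / 4) (hw : |w| < 1 / 4) (i : ℕ) :
    |PP u v w i| ^ 2 ≤ 4 * i + 1 := by
  induction i with
  | zero => simp [PP]
  | succ i ih =>
    have : PP u v w (i + 1) = PP u v w i * (1 + cc u v w i) := by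
      simp [PP, Finset.prod_range_succ]
    rw [this, abs_mul, mul_pow]
    have h1 : |1 + cc u v w i| ≤ 1 + 1 / (2 * i + 1) := by
      refine (abs_add_le _ _).trans ?_
      rw [abs_one]
      linarith [cc_abs u v w hu hv hw i]
    have h2 : |1 + cc u v w i| ^ 2 ≤ (1 + 1 / (2 * i + 1)) ^ 2 := by gcongr
    refine (mul_le_mul ih h2 (by positivity) (by positivity)).trans ?_
    have hi : (0 : ℝ) ≤ i := Nat.cast_nonneg i
    have : (1 + 1 / (2 * (i : ℝ) + 1)) ^ 2 = (2 * i + 2) ^ 2 / (2 * i + 1) ^ 2 := by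
      field_simp; ring
    rw [this, mul_div_assoc', div_le_iff₀ (by positivity)]
    push_cast
    nlinarith

theorem main_summable (u v w : ℝ) (hu : |u| < 1 / 4) (hv : |v| < 1 / 4) (hw : |w| < 1 / 4) :
    Summable (fun i : ℕ => 1 / ((2 * i + 1) * (2 * i + 1 - u)) * PP u v w i) := by
  have h := ((Real.summable_one_div_nat_add_rpow 1 (3 / 2)).2 (by norm_num)).mul_left 4
  refine Summable.of_norm_bounded h fun i => ?_
  have hi : (0 : ℝ) ≤ i := Nat.cast_nonneg i
  have hu' := abs_lt.1 hu
  have hp : |PP u v w i| ≤ 2 * √((i : ℝ) + 1) := by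
    refine abs_le_of_sq_le_sq' ?_ (by positivity) |>.2
    rw [mul_pow, Real.sq_sqrt (by positivity)]
    linarith [PP_abs u v w hu hv hw i]
  rw [Real.norm_eq_abs, abs_mul, abs_of_pos (by linarith : (0 : ℝ) < i + 1)]
  have e : ((i : ℝ) + 1) ^ (3 / 2 : ℝ) = (i + 1) * √((i : ℝ) + 1) := by
    rw [Real.sqrt_eq_rpow, ← Real.rpow_one_add' (by positivity) (by norm_num)]
    norm_num
  have hd : ((i : ℝ) + 1) * ((i + 1) / 2) ≤ (2 * i + 1) * (2 * i + 1 - u) := by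
    apply mul_le_mul <;> linarith
  have hd0 : 0 < ((i : ℝ) + 1) * ((i + 1) / 2) := by positivity
  rw [abs_of_pos (by apply one_div_pos.2; linarith)]
  have hs : 0 < √((i : ℝ) + 1) := Real.sqrt_pos.2 (by linarith)
  have hq : √((i : ℝ) + 1) ^ 2 = i + 1 := Real.sq_sqrt (by linarith)
  calc _ ≤ 1 / (((i : ℝ) + 1) * ((i + 1) / 2)) * (2 * √((i : ℝ) + 1)) := by
        apply mul_le_mul _ hp (abs_nonneg _) (by positivity)
        exact one_div_le_one_div_of_le hd0 hd
    _ = _ := by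
      rw [e]
      field_simp
      rw [hq]
      ring

theorem wt_abs (u v w : ℝ) (k : ℕ) : |wt u v w k| = wt |u| |v| |w| k := by
  unfold wt; split_ifs <;> simp [abs_mul, abs_pow]

theorem fw_abs (u : ℝ) (k : ℕ) : |fw u k| = fw |u| k := by
  unfold fw; split_ifs <;> simp [abs_pow]

theorem WW_abs (u v w : ℝ) (K : List ℕ) : |WW u v w K| = WW |u| |v| |w| K := by
  induction K with
  | nil => simp [WW]
  | cons k K ih =>
    simp only [WW, List.map_cons, List.prod_cons, abs_mul, wt_abs] at *
    rw [ih]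

/-- the big family -/
noncomputable def FF (u v w : ℝ) (x : ℕ × (ℕ × List ℕ)) : ℝ :=
  (fw u x.2.1 * ((2 * (x.1 : ℝ) + 1) ^ x.2.1)⁻¹) * (WW u v w x.2.2 * TT x.2.2 x.1)

theorem FF_abs (u v w : ℝ) (x) : |FF u v w x| = FF |u| |v| |w| x := by
  simp only [FF, abs_mul, WW_abs, fw_abs, abs_of_nonneg (TT_nonneg _ _)]
  rw [abs_of_nonneg (by positivity : (0 : ℝ) ≤ ((2 * (x.1 : ℝ) + 1) ^ x.2.1)⁻¹)]

theorem FF_fiber (u v w : ℝ) (hu : |u| < 1 / 4) (i : ℕ) :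
    HasSum (fun y => FF u v w (i, y)) (1 / ((2 * i + 1) * (2 * i + 1 - u)) * PP u v w i) := by
  have h := hasSum_mul' (fw_hasSum u hu i) (WT_hasSum u v w hu i)
  exact hs_congr h (fun y => by simp only [FF]) rfl

theorem FF_summable (u v w : ℝ) (hu : |u| < 1 / 4) (hv : |v| < 1 / 4) (hw : |w| < 1 / 4) :
    Summable (FF u v w) := by
  rw [← summable_abs_iff]
  simp only [FF_abs]
  refine (hasSum_prod_nn _ _ _ (fun x => ?_) (fun i => FF_fiber |u| |v| |w| (by simpa using hu) i)
    (main_summable |u| |v| |w| (by simpa using hu) (by simpa using hv)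
      (by simpa using hw)).hasSum).summable
  rw [← FF_abs]; exact abs_nonneg _

theorem WW_pos (K : List ℕ) (hK : ∀ i ∈ K, 1 ≤ i) : 0 < WW (1/8) (1/8) (1/8) K := by
  induction K with
  | nil => simp [WW]
  | cons k K ih =>
    have h1 := ih (fun i hi => hK i (by simp [hi]))
    have h2 : 1 ≤ k := hK k (by simp)
    have : WW (1/8) (1/8) (1/8) (k :: K) = wt (1/8) (1/8) (1/8) k * WW (1/8) (1/8) (1/8) K := by
      simp [WW]
    rw [this]
    refine mul_pos ?_ h1
    unfold wt
    rw [if_neg (by omega)]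
    split_ifs <;> positivity

theorem WW_zero (u v w : ℝ) (K : List ℕ) (hK : ¬ ∀ i ∈ K, 1 ≤ i) : WW u v w K = 0 := by
  push Not at hK
  obtain ⟨i, hi, h⟩ := hK
  have : i = 0 := by omega
  subst this
  refine List.prod_eq_zero ?_
  rw [List.mem_map]
  exact ⟨0, hi, by simp [wt]⟩

theorem multT_cons' (k : ℕ) (K : List ℕ) (hk : 2 ≤ k) (hK : ∀ i ∈ K, 1 ≤ i) :
    HasSum (fun i : ℕ => ((2 * (i : ℝ) + 1) ^ k)⁻¹ * TT K i) (multT (k :: K)) := by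
  refine multT_cons k K ?_
  have h := (FF_summable (1/8) (1/8) (1/8) (by norm_num [abs_of_pos]) (by norm_num [abs_of_pos])
    (by norm_num [abs_of_pos])).prod_symm.prod_factor (k, K)
  have h1 := WW_pos K hK
  have h2 : fw (1/8) k ≠ 0 := by
    unfold fw; rw [if_neg (by omega)]; positivity
  rw [← summable_mul_left_iff (mul_ne_zero h2 h1.ne')]
  refine h.congr fun i => ?_
  simp only [FF, Prod.swap]
  ring

/-- total weight -/
noncomputable def VV (u v w : ℝ) : List ℕ → ℝ
  | [] => 0
  | k :: K => fw u k * WW u v w K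

theorem FF_fiber2 (u v w : ℝ) (k : ℕ) (K : List ℕ) :
    HasSum (fun i => FF u v w (i, (k, K))) (VV u v w (k :: K) * multT (k :: K)) := by
  by_cases h : 2 ≤ k ∧ ∀ i ∈ K, 1 ≤ i
  · refine hs_congr ((multT_cons' k K h.1 h.2).mul_left (VV u v w (k :: K))) (fun i => ?_) rfl
    simp only [FF, VV]; ring
  · have h0 : fw u k * WW u v w K = 0 := by
      by_cases hk : 2 ≤ k
      · rw [WW_zero u v w K (fun h' => h ⟨hk, h'⟩), mul_zero]
      · unfold fw; rw [if_pos (by omega), zero_mul]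
    refine hs_congr hasSum_zero (fun i => ?_) (by simp [VV, h0])
    have : FF u v w (i, (k, K)) = (fw u k * WW u v w K) * (((2 * (i : ℝ) + 1) ^ k)⁻¹ * TT K i) := by
      simp only [FF]; ring
    rw [this, h0, zero_mul]

theorem VV_hasSum (u v w : ℝ) (hu : |u| < 1 / 4) (hv : |v| < 1 / 4) (hw : |w| < 1 / 4) :
    HasSum (fun K => VV u v w K * multT K)
      (∑' i : ℕ, 1 / ((2 * (i : ℝ) + 1) * (2 * i + 1 - u)) * PP u v w i) := by
  have hs := FF_summable u v w hu hv hw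
  have h1 := hs.hasSum.prod_fiberwise (fun i => FF_fiber u v w hu i)
  rw [h1.tsum_eq]
  refine list_hasSum _ (by simp [VV]) _ ?_
  have h2 : HasSum (FF u v w ∘ Prod.swap) (∑' x, FF u v w x) :=
    (Equiv.prodComm _ _).hasSum_iff.2 hs.hasSum
  exact h2.prod_fiberwise (fun x => FF_fiber2 u v w x.1 x.2)

theorem WW_form (K : List ℕ) (hK : ∀ i ∈ K, 1 ≤ i) : ∃ a b c : ℕ, K.sum = a + b + 2 * c ∧
    K.length = b + c ∧ K.countP (fun i => decide (2 ≤ i)) = c ∧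
    ∀ u v w : ℝ, WW u v w K = u ^ a * v ^ b * w ^ c := by
  induction K with
  | nil => exact ⟨0, 0, 0, by simp [WW]⟩
  | cons k K ih =>
    obtain ⟨a, b, c, h1, h2, h3, h4⟩ := ih (fun i hi => hK i (by simp [hi]))
    have hk : 1 ≤ k := hK k (by simp)
    have e : ∀ u v w, WW u v w (k :: K) = wt u v w k * WW u v w K := by
      intro u v w; simp [WW]
    by_cases hk1 : k = 1
    · refine ⟨a, b + 1, c, ?_, ?_, ?_, ?_⟩
      · simp [h1, hk1]; omega
      · simp [h2]; omega
      · simp [h3, hk1]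
      · intro u v w
        rw [e, h4]; simp [wt, hk1]; ring
    · refine ⟨a + (k - 2), b, c + 1, ?_, ?_, ?_, ?_⟩
      · simp [h1]; omega
      · simp [h2]; omega
      · rw [List.countP_cons_of_pos (by simp; omega), h3]
      · intro u v w
        rw [e, h4]
        unfold wt
        rw [if_neg (by omega), if_neg hk1]; ring

/-- the family over indices and exponents -/
noncomputable def HH (u v w : ℝ) (x : List ℕ × (ℕ × ℕ × ℕ)) : ℝ :=
  (if Admissible x.1 ∧ x.1.sum = x.2.1 + x.2.2.1 + 2 * x.2.2.2 + 2 ∧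
      x.1.length = x.2.2.1 + x.2.2.2 + 1 ∧
        x.1.countP (fun i => decide (2 ≤ i)) = x.2.2.2 + 1 then
      multT x.1
    else 0) * u ^ x.2.1 * v ^ x.2.2.1 * w ^ x.2.2.2

theorem HH_abs (u v w : ℝ) (x) : |HH u v w x| = HH |u| |v| |w| x := by
  unfold HH
  rw [abs_mul, abs_mul, abs_mul, abs_pow, abs_pow, abs_pow]
  congr 3
  apply abs_of_nonneg
  split_ifs
  · exact multT_nonneg _
  · exact le_rfl

theorem HH_fiber (u v w : ℝ) (K : List ℕ) :
    HasSum (fun p => HH u v w (K, p)) (VV u v w K * multT K) := by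
  by_cases hA : Admissible K
  · cases K with
    | nil => exact absurd hA.2 (by simp)
    | cons k K =>
      have hk : 2 ≤ k := by simpa using hA.2
      obtain ⟨a, b, c, h1, h2, h3, h4⟩ := WW_form K (fun i hi => hA.1 i (by simp [hi]))
      have hs : (k :: K).sum = a + (k - 2) + b + 2 * c + 2 := by simp [h1]; omega
      have hl : (k :: K).length = b + c + 1 := by simp [h2]
      have hc : (k :: K).countP (fun i => decide (2 ≤ i)) = c + 1 := by
        rw [List.countP_cons_of_pos (by simp; omega), h3]
      refine hs_congr (hasSum_single (f := fun p => HH u v w (k :: K, p)) (a + (k - 2), b, c) ?_)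
        (fun _ => rfl) ?_
      · rintro ⟨a', b', c'⟩ hne
        simp only [HH]
        rw [if_neg]
        · simp
        · rintro ⟨-, g1, g2, g3⟩
          rw [hs] at g1
          rw [hl] at g2
          rw [hc] at g3
          apply hne
          simp only [Prod.mk.injEq]
          omega
      · simp only [HH]
        rw [if_pos ⟨hA, hs, hl, hc⟩]
        simp only [VV, h4, fw]
        rw [if_neg (by omega)]
        ring
  · refine hs_congr hasSum_zero (fun p => ?_) ?_
    · simp [HH, hA]
    · cases K with
      | nil => simp [VV]
      | cons k K =>
        by_cases hk : 2 ≤ k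
        · have : ¬ ∀ i ∈ K, 1 ≤ i := by
            intro h
            refine hA ⟨?_, by simpa using hk⟩
            intro i hi
            rcases List.mem_cons.1 hi with rfl | hi
            · omega
            · exact h i hi
          simp [VV, WW_zero u v w K this]
        · simp only [VV, fw]; rw [if_pos (by omega)]; simp

theorem HH_summable (u v w : ℝ) (hu : |u| < 1 / 4) (hv : |v| < 1 / 4) (hw : |w| < 1 / 4) :
    Summable (HH u v w) := by
  rw [← summable_abs_iff]
  simp only [HH_abs]
  refine (hasSum_prod_nn _ _ _ (fun x => ?_) (fun K => HH_fiber |u| |v| |w| K)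
    (VV_hasSum |u| |v| |w| (by simpa using hu) (by simpa using hv)
      (by simpa using hw))).summable
  rw [← HH_abs]; exact abs_nonneg _

theorem G_hasSum (u v w : ℝ) (hu : |u| < 1 / 4) (hv : |v| < 1 / 4) (hw : |w| < 1 / 4) :
    HasSum (fun p : ℕ × ℕ × ℕ =>
        G0h (p.1 + p.2.1 + 2 * p.2.2 + 2) (p.2.1 + p.2.2 + 1) (p.2.2 + 1)
          * u ^ p.1 * v ^ p.2.1 * w ^ p.2.2)
      (∑' i : ℕ, 1 / ((2 * (i : ℝ) + 1) * (2 * i + 1 - u)) * PP u v w i) := by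
  have hs := HH_summable u v w hu hv hw
  have h1 := hs.hasSum.prod_fiberwise (fun K => HH_fiber u v w K)
  rw [(VV_hasSum u v w hu hv hw).unique h1]
  have h2 : HasSum (HH u v w ∘ Prod.swap) (∑' x, HH u v w x) :=
    (Equiv.prodComm _ _).hasSum_iff.2 hs.hasSum
  refine hs_congr (h2.prod_fiberwise (fun p => (h2.summable.prod_factor p).hasSum)) (fun p => ?_) rfl
  simp only [Function.comp, Prod.swap, HH, G0h]
  rw [tsum_mul_right, tsum_mul_right, tsum_mul_right]

theorem poch_succ' (a : ℂ) (n : ℕ) : a * poch (a + 1) n = poch a n * (a + n) := by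
  have h : poch a (n + 1) = poch a n * (a + n) := by simp [poch, Finset.prod_range_succ]
  rw [← h]
  simp only [poch]
  rw [Finset.prod_range_succ']
  rw [mul_comm]
  push_cast
  congr 1
  · refine Finset.prod_congr rfl fun i _ => by ring
  · simp

theorem poch_one (n : ℕ) : poch 1 n = n.factorial := by
  induction n with
  | zero => simp [poch]
  | succ n ih =>
    have h : poch 1 (n + 1) = poch 1 n * (1 + n) := by simp [poch, Finset.prod_range_succ]
    rw [h, ih, Nat.factorial_succ]; push_cast; ring

theorem PP_poch (u v w : ℝ) (hu : |u| < 1 / 4) (α β : ℂ)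
    (h1 : α + β = 1 - (u : ℂ) / 2 + (v : ℂ) / 2)
    (h2 : α * β = (1 - (u : ℂ) + (v : ℂ) - (u : ℂ) * (v : ℂ) + (w : ℂ)) / 4) (i : ℕ) :
    (PP u v w i : ℂ) * (poch (1 / 2) i * poch ((1 - u) / 2) i) = poch α i * poch β i := by
  induction i with
  | zero => simp [PP, poch]
  | succ i ih =>
    have e : ∀ a : ℂ, poch a (i + 1) = poch a i * (a + i) := fun a => by
      simp [poch, Finset.prod_range_succ]
    have hi : (0 : ℝ) ≤ i := Nat.cast_nonneg i
    have hu' := abs_lt.1 hu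
    have h3 : (2 * (i : ℂ) + 1 - u) ≠ 0 := by
      have : (2 * (i : ℝ) + 1 - u) ≠ 0 := by linarith
      exact_mod_cast this
    have h4 : (2 * (i : ℂ) + 1) ≠ 0 := by
      have : (2 * (i : ℝ) + 1) ≠ 0 := by positivity
      exact_mod_cast this
    have hc : (1 + (cc u v w i : ℂ)) * ((1 / 2 + i) * ((1 - u) / 2 + i)) = (α + i) * (β + i) := by
      have : (α + i) * (β + i) = α * β + (α + β) * i + i ^ 2 := by ring
      rw [this, h1, h2]
      simp only [cc]
      push_cast
      field_simp
      ring
    have hP : (PP u v w (i + 1) : ℂ) = PP u v w i * (1 + cc u v w i) := by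
      simp [PP, Finset.prod_range_succ]
    rw [e, e, e, e, hP]
    calc _ = ((PP u v w i : ℂ) * (poch (1 / 2) i * poch ((1 - u) / 2) i)) *
        ((1 + (cc u v w i : ℂ)) * ((1 / 2 + i) * ((1 - u) / 2 + i))) := by ring
      _ = _ := by rw [ih, hc]; ring

theorem poch_ne (r : ℝ) (hr : 0 < r) (n : ℕ) : poch (r : ℂ) n ≠ 0 := by
  unfold poch
  rw [Finset.prod_ne_zero_iff]
  intro i _
  have : (r + i : ℝ) ≠ 0 := by positivity
  exact_mod_cast this

theorem term_eq (u v w : ℝ) (hu : |u| < 1 / 4) (α β : ℂ)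
    (h1 : α + β = 1 - (u : ℂ) / 2 + (v : ℂ) / 2)
    (h2 : α * β = (1 - (u : ℂ) + (v : ℂ) - (u : ℂ) * (v : ℂ) + (w : ℂ)) / 4) (i : ℕ) :
    ((1 / ((2 * (i : ℝ) + 1) * (2 * i + 1 - u)) * PP u v w i : ℝ) : ℂ) =
    (1 - (u : ℂ))⁻¹ * (poch α i * poch β i * poch 1 i /
      ((i.factorial : ℂ) * poch ((3 - (u : ℂ)) / 2) i * poch (3 / 2) i) * 1 ^ i) := by
  have hi : (0 : ℝ) ≤ i := Nat.cast_nonneg i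
  have hu' := abs_lt.1 hu
  have h3 : (2 * (i : ℂ) + 1 - u) ≠ 0 := by
    have : (2 * (i : ℝ) + 1 - u) ≠ 0 := by linarith
    exact_mod_cast this
  have h4 : (2 * (i : ℂ) + 1) ≠ 0 := by
    have : (2 * (i : ℝ) + 1) ≠ 0 := by positivity
    exact_mod_cast this
  have h5 : (1 - (u : ℂ)) ≠ 0 := by
    have : (1 - u) ≠ 0 := by linarith
    exact_mod_cast this
  have p1 : poch (3 / 2) i ≠ 0 := by
    have := poch_ne (3 / 2) (by norm_num) i
    push_cast at this; exact this
  have p2 : poch ((3 - u) / 2) i ≠ 0 := by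
    have := poch_ne ((3 - u) / 2) (by linarith) i
    push_cast at this; exact this
  have p3 : (i.factorial : ℂ) ≠ 0 := by exact_mod_cast i.factorial_ne_zero
  have q1 := poch_succ' (1 / 2) i
  have q2 := poch_succ' ((1 - u) / 2) i
  rw [show (1 / 2 : ℂ) + 1 = 3 / 2 by norm_num] at q1
  rw [show (1 - (u : ℂ)) / 2 + 1 = (3 - u) / 2 by ring] at q2
  rw [poch_one, ← PP_poch u v w hu α β h1 h2 i]
  have q1' : poch (3 / 2) i = poch (1 / 2) i * (2 * i + 1) := by linear_combination 2 * q1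
  have q2' : poch (1 / 2) i = poch (3 / 2) i / (2 * i + 1) := by rw [q1']; field_simp
  have q3 : poch ((1 - u) / 2) i = (1 - u) * poch ((3 - u) / 2) i / (2 * i + 1 - u) := by
    rw [eq_div_iff h3]; linear_combination -2 * q2
  rw [q2', q3]
  push_cast
  field_simp
  try simp

/-- Ohno–Zagier type relation for multiple `t`-values (Theorem 1.1):
the generating function of the sums `G₀(k,n,s)` of multiple `t`-values of fixed weight `k`,
depth `n` and height `s` equals `(1/(1-u)) ⬝ ₃F₂(α, β, 1; (3-u)/2, 3/2; 1)` where
`α + β = 1 - u/2 + v/2` and `αβ = (1 - u + v - uv + w)/4`. -/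
theorem ohno_zagier_multiple_t :
    ∃ δ > (0 : ℝ), ∀ u v w : ℝ, |u| < δ → |v| < δ → |w| < δ →
      Summable (fun p : ℕ × ℕ × ℕ =>
        G0h (p.1 + p.2.1 + 2 * p.2.2 + 2) (p.2.1 + p.2.2 + 1) (p.2.2 + 1)
          * u ^ p.1 * v ^ p.2.1 * w ^ p.2.2) ∧
      ∀ α β : ℂ, α + β = 1 - (u : ℂ) / 2 + (v : ℂ) / 2 →
        α * β = (1 - (u : ℂ) + (v : ℂ) - (u : ℂ) * (v : ℂ) + (w : ℂ)) / 4 →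
        ((∑' p : ℕ × ℕ × ℕ,
            G0h (p.1 + p.2.1 + 2 * p.2.2 + 2) (p.2.1 + p.2.2 + 1) (p.2.2 + 1)
              * u ^ p.1 * v ^ p.2.1 * w ^ p.2.2) : ℂ)
          = (1 - (u : ℂ))⁻¹ * hyp3F2 α β 1 ((3 - (u : ℂ)) / 2) (3 / 2) 1 := by
  refine ⟨1 / 4, by norm_num, fun u v w hu hv hw => ?_⟩
  have h := G_hasSum u v w hu hv hw
  refine ⟨h.summable, fun α β h1 h2 => ?_⟩
  have h3 := congrArg (fun x : ℝ => (x : ℂ)) h.tsum_eq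
  simp only [Complex.ofReal_tsum] at h3
  unfold hyp3F2
  rw [← tsum_mul_left]
  refine Eq.trans ?_ (h3.trans ?_)
  · refine tsum_congr fun p => ?_
    push_cast
    rfl
  · exact tsum_congr fun i => term_eq u v w hu α β h1 h2 i
end

section
/- There exists δ > 0 such that for all real u, v, w with |u|, |v|, |w| < δ, the series ∑_{k ≥ n+s, n ≥ s ≥ 1} G_0^*(k,n,s) u^{k−n−s} v^{n−s} w^{s−1} converges absolutely and equals (1/(1−u−v+uv−w)) · ₃F₂((1−u)/2, 1/2, 1; α*, β*; 1), where α* and β* are the two (possibly complex) roots of the quadratic X² − (3 − u/2 − v/2)X + (9 − 3u − 3v + uv − w)/4 = 0 (i.e. α* + β* = 3 − u/2 − v/2 and α*β* = (9 − 3u − 3v + uv − w)/4). -/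
open scoped BigOperators

namespace OZ

def listEquiv : Unit ⊕ (ℕ × List ℕ) ≃ List ℕ where
  toFun x := match x with
    | Sum.inl _ => []
    | Sum.inr p => p.1 :: p.2
  invFun K := match K with
    | [] => Sum.inl ()
    | k :: K => Sum.inr (k, K)
  left_inv x := by rcases x with _ | ⟨k, K⟩ <;> rfl
  right_inv K := by cases K <;> rfl

theorem hasSum_list (f : List ℕ → ℝ) {a : ℝ}
    (h : HasSum (fun p : ℕ × List ℕ => f (p.1 :: p.2)) a) : HasSum f (f [] + a) := by
  rw [← listEquiv.hasSum_iff]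
  refine HasSum.sum ?_ h
  exact hasSum_unique (fun _ : Unit => f [])

/-- The odd number `2 i + 1`. -/
noncomputable def od (i : ℕ) : ℝ := 2 * (i : ℝ) + 1

theorem one_le_od (i : ℕ) : 1 ≤ od i := by
  unfold od; have : (0 : ℝ) ≤ i := Nat.cast_nonneg i; linarith

theorem od_pos (i : ℕ) : 0 < od i := lt_of_lt_of_le one_pos (one_le_od i)

noncomputable def SR : List ℕ → ℕ → ℝ
  | [], _ => 1
  | k :: K, j => ∑ i ∈ Finset.range (j + 1), (od i ^ k)⁻¹ * SR K i

theorem SR_nonneg (K : List ℕ) : ∀ j, 0 ≤ SR K j := by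
  induction K with
  | nil => intro j; simp [SR]
  | cons k K ih =>
    intro j
    simp only [SR]
    exact Finset.sum_nonneg fun i _ =>
      mul_nonneg (inv_nonneg.2 (pow_nonneg (od_pos i).le _)) (ih i)

noncomputable def wt1 (u v w : ℝ) : ℕ → ℝ
  | 0 => 0
  | 1 => v
  | (k + 2) => w * u ^ k

noncomputable def c1 (u : ℝ) : ℕ → ℝ
  | 0 => 0
  | 1 => 0
  | (k + 2) => u ^ k

noncomputable def wt (u v w : ℝ) (K : List ℕ) : ℝ := (K.map (wt1 u v w)).prod

theorem wt_nil (u v w : ℝ) : wt u v w [] = 1 := by simp [wt]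
theorem wt_cons (u v w : ℝ) (k : ℕ) (K : List ℕ) :
    wt u v w (k :: K) = wt1 u v w k * wt u v w K := by simp [wt]

theorem wt1_abs (u v w : ℝ) (k : ℕ) : |wt1 u v w k| = wt1 |u| |v| |w| k := by
  rcases k with _ | _ | k <;> simp [wt1, abs_mul, abs_pow]

theorem c1_abs (u : ℝ) (k : ℕ) : |c1 u k| = c1 |u| k := by
  rcases k with _ | _ | k <;> simp [c1, abs_pow]

theorem wt_abs (u v w : ℝ) (K : List ℕ) : |wt u v w K| = wt |u| |v| |w| K := by
  induction K with
  | nil => simp [wt]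
  | cons k K ih => rw [wt_cons, wt_cons, abs_mul, ih, wt1_abs]

noncomputable def y (u : ℝ) (i : ℕ) : ℝ := (od i * (od i - u))⁻¹
noncomputable def x (u v w : ℝ) (i : ℕ) : ℝ := v / od i + w * y u i

theorem hasSum_c1 (u : ℝ) (hu : |u| < 1) (i : ℕ) :
    HasSum (fun k => c1 u k * (od i ^ k)⁻¹) (y u i) := by
  have h1 := one_le_od i
  have h0 := od_pos i
  have hlt : |u / od i| < 1 := by
    rw [abs_div, abs_of_pos h0, div_lt_one h0]; linarith
  have hne : od i - u ≠ 0 := by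
    have := abs_lt.1 hu; linarith
  have h := (hasSum_geometric_of_abs_lt_one hlt).mul_left ((od i ^ 2)⁻¹)
  rw [← hasSum_nat_add_iff' 2]
  have e1 : (fun k => c1 u (k + 2) * (od i ^ (k + 2))⁻¹)
      = fun k => (od i ^ 2)⁻¹ * (u / od i) ^ k := by
    ext k
    simp only [c1, div_pow, pow_add]
    field_simp
  have e2 : y u i - ∑ k ∈ Finset.range 2, c1 u k * (od i ^ k)⁻¹
      = (od i ^ 2)⁻¹ * (1 - u / od i)⁻¹ := by
    have : (1 - u / od i) = (od i - u) / od i := by field_simp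
    simp only [Finset.sum_range_succ, Finset.sum_range_zero, c1, y, this]
    field_simp
    simp
  rw [e1, e2]
  exact h

theorem hasSum_wt1 (u v w : ℝ) (hu : |u| < 1) (i : ℕ) :
    HasSum (fun k => wt1 u v w k * (od i ^ k)⁻¹) (x u v w i) := by
  have h := (hasSum_c1 u hu i).mul_left w
  have h2 : HasSum (fun k => if k = 1 then v / od i else 0) (v / od i) := hasSum_ite_eq 1 _
  convert h2.add h using 1
  · ext k
    rcases k with _ | _ | k
    · simp [wt1, c1]
    · simp [wt1, c1, div_eq_mul_inv]
    · simp [wt1, c1, mul_assoc]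
  · rfl

theorem step (u v w : ℝ) (hu : |u| < 1) (φ : List ℕ → ℝ) (Q : ℕ → ℝ)
    (h : ∀ i, HasSum (fun K => φ K * SR K i) (Q i)) (j : ℕ) :
    HasSum (fun p : ℕ × List ℕ => wt1 u v w p.1 * φ p.2 * SR (p.1 :: p.2) j)
      (∑ i ∈ Finset.range (j + 1), x u v w i * Q i) := by
  have key : ∀ i ∈ Finset.range (j + 1),
      HasSum (fun p : ℕ × List ℕ => (wt1 u v w p.1 * (od i ^ p.1)⁻¹) * (φ p.2 * SR p.2 i))
        (x u v w i * Q i) := fun i _ =>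
    (hasSum_wt1 u v w hu i).mul (h i)
      (summable_mul_of_summable_norm (hasSum_wt1 u v w hu i).summable.norm (h i).summable.norm)
  convert hasSum_sum key using 1
  ext p
  simp only [SR, Finset.mul_sum]
  exact Finset.sum_congr rfl fun i _ => by ring

noncomputable def A (u v w : ℝ) : ℕ → ℕ → ℝ
  | 0, _ => 1
  | N + 1, j => 1 + ∑ i ∈ Finset.range (j + 1), x u v w i * A u v w N i

theorem hasSum_A (u v w : ℝ) (hu : |u| < 1) (N : ℕ) : ∀ j,
    HasSum (fun K : List ℕ => (if K.length ≤ N then wt u v w K else 0) * SR K j)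
      (A u v w N j) := by
  induction N with
  | zero =>
    intro j
    have := hasSum_ite_eq (α := ℝ) ([] : List ℕ) 1
    convert this using 1
    · ext K
      cases K <;> simp [wt_nil, SR]
    · simp [A]
  | succ N ih =>
    intro j
    have h := step u v w hu _ _ ih j
    have h2 : HasSum (fun p : ℕ × List ℕ =>
        (fun K : List ℕ => (if K.length ≤ N + 1 then wt u v w K else 0) * SR K j) (p.1 :: p.2))
        (∑ i ∈ Finset.range (j + 1), x u v w i * A u v w N i) := by
      convert h using 1
      ext p
      simp only [List.length_cons, Nat.add_le_add_iff_right, wt_cons]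
      split_ifs <;> simp
    have h3 := hasSum_list (fun K : List ℕ =>
      (if K.length ≤ N + 1 then wt u v w K else 0) * SR K j) h2
    simpa [A, wt_nil, SR] using h3

theorem sum_inv_sqrt (j : ℕ) :
    ∑ i ∈ Finset.range (j + 1), (Real.sqrt (od i))⁻¹ ≤ Real.sqrt (od j) := by
  induction j with
  | zero => simp [od]
  | succ j ih =>
    rw [Finset.sum_range_succ]
    have ha := Real.sqrt_pos.2 (od_pos j)
    have hb := Real.sqrt_pos.2 (od_pos (j + 1))
    have ha2 := Real.sq_sqrt (od_pos j).le
    have hb2 := Real.sq_sqrt (od_pos (j + 1)).le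
    have hd : od (j + 1) = od j + 2 := by simp [od]; ring
    set a := Real.sqrt (od j)
    set b := Real.sqrt (od (j + 1))
    have hab : b ^ 2 = a ^ 2 + 2 := by rw [ha2, hb2, hd]
    have : b⁻¹ ≤ b - a := by
      rw [inv_le_iff_one_le_mul₀ hb]
      nlinarith [sq_nonneg (b - a)]
    linarith

theorem y_bound (u : ℝ) (hu : |u| < 1 / 10) (i : ℕ) : 0 ≤ y u i ∧ y u i ≤ 2 / od i ^ 2 := by
  have h1 := one_le_od i
  have := abs_lt.1 hu
  have hp : 0 < od i * (od i - u) := mul_pos (od_pos i) (by linarith)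
  refine ⟨inv_nonneg.2 hp.le, ?_⟩
  unfold y
  rw [inv_eq_one_div, div_le_div_iff₀ hp (by positivity)]
  nlinarith

theorem x_bound (u v w : ℝ) (hu : |u| < 1 / 10) (hv : |v| < 1 / 10) (hw : |w| < 1 / 10)
    (i : ℕ) : |x u v w i| ≤ (1 / 2) / od i := by
  have h1 := one_le_od i
  have h0 := od_pos i
  obtain ⟨ya, yb⟩ := y_bound u hu i
  have hyo : y u i ≤ 2 / od i := yb.trans (by
    apply div_le_div_of_nonneg_left (by norm_num) h0; nlinarith)
  unfold x
  calc |v / od i + w * y u i| ≤ |v / od i| + |w * y u i| := abs_add_le _ _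
    _ = |v| / od i + |w| * y u i := by rw [abs_div, abs_mul, abs_of_pos h0, abs_of_nonneg ya]
    _ ≤ (1 / 10) / od i + (1 / 10) * (2 / od i) := by gcongr
    _ = (3 / 10) / od i := by ring
    _ ≤ (1 / 2) / od i := div_le_div_of_nonneg_right (by norm_num) h0.le

theorem A_bound (u v w : ℝ) (hu : |u| < 1 / 10) (hv : |v| < 1 / 10) (hw : |w| < 1 / 10)
    (N : ℕ) : ∀ j, |A u v w N j| ≤ 2 * Real.sqrt (od j) := by
  induction N with
  | zero =>
    intro j
    have : 1 ≤ Real.sqrt (od j) := Real.one_le_sqrt.2 (one_le_od j)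
    simp only [A, abs_one]; linarith
  | succ N ih =>
    intro j
    have h1 : 1 ≤ Real.sqrt (od j) := Real.one_le_sqrt.2 (one_le_od j)
    have h2 : |∑ i ∈ Finset.range (j + 1), x u v w i * A u v w N i| ≤ Real.sqrt (od j) := by
      refine (Finset.abs_sum_le_sum_abs _ _).trans (le_trans ?_ (sum_inv_sqrt j))
      refine Finset.sum_le_sum fun i _ => ?_
      rw [abs_mul]
      have hs := Real.sqrt_pos.2 (od_pos i)
      calc _ ≤ (1 / 2) / od i * (2 * Real.sqrt (od i)) :=
            mul_le_mul (x_bound u v w hu hv hw i) (ih i) (abs_nonneg _)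
              (div_nonneg (by norm_num) (od_pos i).le)
        _ = (Real.sqrt (od i))⁻¹ := by
            have := Real.sq_sqrt (od_pos i).le
            nth_rewrite 1 [← this]
            field_simp
    simp only [A]
    have := abs_add_le 1 (∑ i ∈ Finset.range (j + 1), x u v w i * A u v w N i)
    rw [abs_one] at this
    linarith

theorem summable_wt_nonneg (u v w : ℝ) (hu : |u| < 1 / 10) (hv : |v| < 1 / 10)
    (hw : |w| < 1 / 10) (j : ℕ) :
    Summable (fun K => |wt u v w K * SR K j|) ∧
      ∑' K, |wt u v w K * SR K j| ≤ 2 * Real.sqrt (od j) := by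
  have hb : ∀ s : Finset (List ℕ), ∑ K ∈ s, |wt u v w K * SR K j| ≤ 2 * Real.sqrt (od j) := by
    intro s
    have h := hasSum_A |u| |v| |w| (by rw [abs_abs]; linarith) (s.sup List.length) j
    have h2 := A_bound |u| |v| |w| (by rwa [abs_abs]) (by rwa [abs_abs]) (by rwa [abs_abs])
      (s.sup List.length) j
    have h3 := sum_le_hasSum s (fun K _ => by
      split_ifs
      · exact mul_nonneg (by rw [← wt_abs]; exact abs_nonneg _) (SR_nonneg K j)
      · simp) h
    refine le_trans (le_of_eq ?_) (h3.trans ((le_abs_self _).trans h2))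
    refine Finset.sum_congr rfl fun K hK => ?_
    rw [if_pos (Finset.le_sup (f := List.length) hK), abs_mul, wt_abs,
      abs_of_nonneg (SR_nonneg K j)]
  exact ⟨summable_of_sum_le (fun _ => abs_nonneg _) hb,
    Real.tsum_le_of_sum_le (fun _ => abs_nonneg _) hb⟩

noncomputable def P (u v w : ℝ) (j : ℕ) : ℝ := ∑' K, wt u v w K * SR K j

theorem hasSum_P (u v w : ℝ) (hu : |u| < 1 / 10) (hv : |v| < 1 / 10)
    (hw : |w| < 1 / 10) (j : ℕ) : HasSum (fun K => wt u v w K * SR K j) (P u v w j) :=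
  (summable_wt_nonneg u v w hu hv hw j).1.of_abs.hasSum

theorem P_eq (u v w : ℝ) (hu : |u| < 1 / 10) (hv : |v| < 1 / 10)
    (hw : |w| < 1 / 10) (j : ℕ) :
    P u v w j = 1 + ∑ i ∈ Finset.range (j + 1), x u v w i * P u v w i := by
  have h := step u v w (by linarith) _ _ (hasSum_P u v w hu hv hw) j
  have h2 : HasSum (fun p : ℕ × List ℕ =>
      (fun K : List ℕ => wt u v w K * SR K j) (p.1 :: p.2))
      (∑ i ∈ Finset.range (j + 1), x u v w i * P u v w i) := by
    simpa only [wt_cons] using h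
  have h3 := hasSum_list (fun K : List ℕ => wt u v w K * SR K j) h2
  rw [(hasSum_P u v w hu hv hw j).unique h3]
  simp [wt_nil, SR]

theorem P_zero (u v w : ℝ) (hu : |u| < 1 / 10) (hv : |v| < 1 / 10)
    (hw : |w| < 1 / 10) : P u v w 0 * (1 - x u v w 0) = 1 := by
  have := P_eq u v w hu hv hw 0
  simp only [zero_add, Finset.sum_range_one] at this
  linarith

theorem P_succ (u v w : ℝ) (hu : |u| < 1 / 10) (hv : |v| < 1 / 10)
    (hw : |w| < 1 / 10) (j : ℕ) : P u v w (j + 1) * (1 - x u v w (j + 1)) = P u v w j := by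
  have h1 := P_eq u v w hu hv hw j
  have h2 := P_eq u v w hu hv hw (j + 1)
  rw [Finset.sum_range_succ] at h2
  linarith

open Classical in
noncomputable def cterm (K : List ℕ) (B : ℕ → Prop) (m : Fin K.length → ℕ) : ENNReal :=
  if ((∀ i, Odd (m i)) ∧ (∀ i j : Fin K.length, i < j → m j ≤ m i)) ∧ (∀ i, B (m i)) then
    ENNReal.ofReal (∏ i, ((m i : ℝ) ^ K.get i)⁻¹) else 0

open Classical in
theorem cterm_cons (k : ℕ) (K : List ℕ) (B : ℕ → Prop) (hB : ∀ a b, a ≤ b → B b → B a)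
    (a : ℕ) (m : Fin K.length → ℕ) :
    cterm (k :: K) B (Fin.cons a m : Fin (K.length + 1) → ℕ) =
      (if Odd a ∧ B a then ENNReal.ofReal (((a : ℝ) ^ k)⁻¹) else 0)
        * cterm K (fun b => b ≤ a) m := by
  unfold cterm
  have hprod : (∏ i : Fin (k :: K).length,
      ((((Fin.cons a m : Fin (K.length + 1) → ℕ) i : ℕ) : ℝ) ^ (k :: K).get i)⁻¹)
      = ((a : ℝ) ^ k)⁻¹ * ∏ i, ((m i : ℝ) ^ K.get i)⁻¹ := by
    exact Fin.prod_univ_succ (n := K.length) _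
  rw [hprod]
  have hcond : (((∀ i : Fin (K.length + 1), Odd ((Fin.cons a m : Fin (K.length + 1) → ℕ) i)) ∧
      (∀ i j : Fin (K.length + 1), i < j → (Fin.cons a m : Fin (K.length + 1) → ℕ) j
        ≤ (Fin.cons a m : Fin (K.length + 1) → ℕ) i)) ∧
      (∀ i : Fin (K.length + 1), B ((Fin.cons a m : Fin (K.length + 1) → ℕ) i))) ↔
      (Odd a ∧ B a) ∧ (((∀ i, Odd (m i)) ∧ (∀ i j : Fin K.length, i < j → m j ≤ m i)) ∧
        (∀ i, m i ≤ a)) := by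
    simp only [Fin.forall_fin_succ, Fin.cons_zero, Fin.cons_succ, Fin.succ_lt_succ_iff,
      Fin.succ_pos, Fin.not_lt_zero, false_imp_iff, true_imp_iff, true_and]
    constructor
    · rintro ⟨⟨⟨h1, h2⟩, h3, h4⟩, h5, h6⟩
      exact ⟨⟨h1, h5⟩, ⟨h2, fun i j => h4 i j⟩, h3⟩
    · rintro ⟨⟨h1, h5⟩, ⟨h2, h4⟩, h3⟩
      exact ⟨⟨⟨h1, h2⟩, h3, fun i j => h4 i j⟩, h5, fun i => hB _ _ (h3 i) h5⟩
  have hcond' := propext hcond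
  simp only [List.length_cons] at *
  simp only [hcond']
  by_cases h1 : Odd a ∧ B a
  · by_cases h2 : ((∀ i, Odd (m i)) ∧ (∀ i j : Fin K.length, i < j → m j ≤ m i)) ∧
        (∀ i, m i ≤ a)
    · rw [if_pos ⟨h1, h2⟩, if_pos h1, if_pos h2, ENNReal.ofReal_mul (by positivity)]
    · rw [if_neg (fun h => h2 h.2), if_neg h2, mul_zero]
  · rw [if_neg (fun h => h1 h.1), if_neg h1, zero_mul]

open Classical in
theorem tsum_cterm_cons (k : ℕ) (K : List ℕ) (B : ℕ → Prop) (hB : ∀ a b, a ≤ b → B b → B a)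
    (ih : ∀ j, ∑' m, cterm K (fun b => b ≤ 2 * j + 1) m = ENNReal.ofReal (SR K j)) :
    ∑' m, cterm (k :: K) B m = ∑' i : ℕ, if B (2 * i + 1) then
      ENNReal.ofReal ((od i ^ k)⁻¹ * SR K i) else 0 := by
  have e := (Fin.consEquiv (n := K.length) (fun _ => ℕ)).tsum_eq (cterm (k :: K) B)
  refine e.symm.trans ?_
  have e2 : ∀ p : ℕ × (Fin K.length → ℕ),
      cterm (k :: K) B (Fin.consEquiv (n := K.length) (fun _ => ℕ) p) =
      (if Odd p.1 ∧ B p.1 then ENNReal.ofReal (((p.1 : ℝ) ^ k)⁻¹) else 0)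
        * cterm K (fun b => b ≤ p.1) p.2 := fun p => cterm_cons k K B hB p.1 p.2
  refine (tsum_congr e2).trans ?_
  rw [ENNReal.tsum_prod (f := fun a m =>
    (if Odd a ∧ B a then ENNReal.ofReal (((a : ℝ) ^ k)⁻¹) else 0)
        * cterm K (fun b => b ≤ a) m)]
  simp only [ENNReal.tsum_mul_left]
  have hinj : Function.Injective (fun i : ℕ => 2 * i + 1) := fun a b h => by
    simp only at h; omega
  rw [← hinj.tsum_eq]
  · refine tsum_congr fun i => ?_
    rw [ih i]
    have ho : Odd (2 * i + 1) := ⟨i, rfl⟩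
    by_cases hb : B (2 * i + 1)
    · rw [if_pos ⟨ho, hb⟩, if_pos hb, ENNReal.ofReal_mul (inv_nonneg.2 (pow_nonneg (od_pos i).le _))]
      simp [od]
    · rw [if_neg (fun h => hb h.2), if_neg hb, zero_mul]
  · intro a ha
    by_contra hn
    apply ha
    have : ¬ Odd a := fun ⟨i, hi⟩ => hn ⟨i, hi.symm⟩
    simp [this]

theorem tsum_cterm (K : List ℕ) :
    ∀ j, ∑' m, cterm K (fun b => b ≤ 2 * j + 1) m = ENNReal.ofReal (SR K j) := by
  induction K with
  | nil =>
    intro j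
    have h0 : ∀ m : Fin ([] : List ℕ).length → ℕ,
        cterm [] (fun b => b ≤ 2 * j + 1) m = 1 := fun m => by
      have e : IsEmpty (Fin ([] : List ℕ).length) := inferInstanceAs (IsEmpty (Fin 0))
      simp [cterm]
    have hU : Unique (Fin ([] : List ℕ).length → ℕ) := inferInstanceAs (Unique (Fin 0 → ℕ))
    simp only [h0, SR, ENNReal.ofReal_one]
    exact (hasSum_unique (fun _ : (Fin ([] : List ℕ).length → ℕ) => (1 : ENNReal))).tsum_eq
  | cons k K ih =>
    intro j
    rw [tsum_cterm_cons k K _ (fun a b h1 h2 => h1.trans h2) ih]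
    rw [tsum_eq_sum (s := Finset.range (j + 1))]
    · simp only [SR]
      rw [ENNReal.ofReal_sum_of_nonneg]
      · refine Finset.sum_congr rfl fun i hi => ?_
        rw [if_pos]
        have := Finset.mem_range.1 hi
        omega
      · exact fun i _ => mul_nonneg (inv_nonneg.2 (pow_nonneg (od_pos i).le _)) (SR_nonneg K i)
    · intro b hb
      rw [if_neg]
      rw [Finset.mem_range] at hb
      omega

theorem multTStar_cons (k : ℕ) (K : List ℕ) :
    multTStar (k :: K) = ∑' i, (od i ^ k)⁻¹ * SR K i := by
  have h := tsum_cterm_cons k K (fun _ => True) (fun _ _ _ _ => trivial) (tsum_cterm K)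
  have h2 := congrArg ENNReal.toReal h
  rw [ENNReal.tsum_toReal_eq, ENNReal.tsum_toReal_eq] at h2
  · unfold multTStar
    convert h2 using 1
    · refine tsum_congr fun m => ?_
      unfold cterm
      simp only [implies_true, and_true]
      split_ifs
      · rw [ENNReal.toReal_ofReal]
        exact Finset.prod_nonneg fun i _ => by positivity
      · simp
    · refine tsum_congr fun i => ?_
      rw [if_pos trivial, ENNReal.toReal_ofReal]
      exact mul_nonneg (inv_nonneg.2 (pow_nonneg (od_pos i).le _)) (SR_nonneg K i)
  · intro i; simp
  · intro m; unfold cterm; split_ifs <;> simp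

theorem tri_summable_abs (u v w : ℝ) (hu : |u| < 1 / 10) (hv : |v| < 1 / 10)
    (hw : |w| < 1 / 10) :
    Summable (fun q : ℕ × (ℕ × List ℕ) =>
      |(c1 u q.2.1 * (od q.1 ^ q.2.1)⁻¹) * (wt u v w q.2.2 * SR q.2.2 q.1)|) := by
  have hf : ∀ j : ℕ, HasSum (fun p : ℕ × List ℕ =>
      |(c1 u p.1 * (od j ^ p.1)⁻¹) * (wt u v w p.2 * SR p.2 j)|)
      (y |u| j * ∑' K, |wt u v w K * SR K j|) := by
    intro j
    have h1 := hasSum_c1 |u| (by rw [abs_abs]; linarith) j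
    have h2 := (summable_wt_nonneg u v w hu hv hw j).1
    have h3 := h1.mul h2.hasSum (summable_mul_of_summable_norm h1.summable.norm h2.norm)
    have e : ∀ p : ℕ × List ℕ, |(c1 u p.1 * (od j ^ p.1)⁻¹) * (wt u v w p.2 * SR p.2 j)| =
        c1 |u| p.1 * (od j ^ p.1)⁻¹ * |wt u v w p.2 * SR p.2 j| := fun p => by
      rw [abs_mul, abs_mul, c1_abs, abs_of_nonneg (inv_nonneg.2 (pow_nonneg (od_pos j).le _))]
    rw [funext e]
    exact h3
  rw [summable_prod_of_nonneg (fun _ => abs_nonneg _)]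
  refine ⟨fun j => (hf j).summable, ?_⟩
  simp only [fun j => (hf j).tsum_eq]
  have hs : Summable (fun j : ℕ => 4 * (1 / ((j : ℝ) + 1) ^ (3 / 2 : ℝ))) := by
    apply Summable.mul_left
    have := (summable_nat_add_iff 1).2
      (Real.summable_one_div_nat_rpow.2 (by norm_num : (1 : ℝ) < 3 / 2))
    simpa using this
  refine Summable.of_nonneg_of_le (fun j => ?_) (fun j => ?_) hs
  · exact mul_nonneg (y_bound _ (by rwa [abs_abs]) j).1 (tsum_nonneg fun _ => abs_nonneg _)
  · have hb := y_bound |u| (by rwa [abs_abs]) j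
    have h0 := od_pos j
    have hle : (j : ℝ) + 1 ≤ od j := by
      unfold od; have : (0 : ℝ) ≤ j := Nat.cast_nonneg j; linarith
    calc _ ≤ 2 / od j ^ 2 * (2 * Real.sqrt (od j)) :=
          mul_le_mul hb.2 (summable_wt_nonneg u v w hu hv hw j).2
            (tsum_nonneg fun _ => abs_nonneg _) (by positivity)
      _ = 4 * (1 / od j ^ (3 / 2 : ℝ)) := by
          have : od j ^ 2 = od j ^ (3 / 2 : ℝ) * Real.sqrt (od j) := by
            rw [Real.sqrt_eq_rpow, ← Real.rpow_add h0]
            norm_num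
          rw [this]
          have := Real.sqrt_pos.2 h0
          have := Real.rpow_pos_of_pos h0 (3 / 2)
          field_simp
          norm_num
      _ ≤ _ := by gcongr

noncomputable def g (u v w : ℝ) : List ℕ → ℝ
  | [] => 0
  | k :: K => multTStar (k :: K) * (c1 u k * wt u v w K)

theorem hasSum_g (u v w : ℝ) (hu : |u| < 1 / 10) (hv : |v| < 1 / 10)
    (hw : |w| < 1 / 10) :
    ∃ a, HasSum (g u v w) a ∧ HasSum (fun j => y u j * P u v w j) a := by
  have hs := (tri_summable_abs u v w hu hv hw).of_abs
  refine ⟨_, ?_, hs.hasSum.prod_fiberwise fun j => ?_⟩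
  · have h1 : HasSum (fun q : (ℕ × List ℕ) × ℕ =>
        (c1 u q.1.1 * (od q.2 ^ q.1.1)⁻¹) * (wt u v w q.1.2 * SR q.1.2 q.2)) _ :=
      (Equiv.prodComm (ℕ × List ℕ) ℕ).hasSum_iff.2 hs.hasSum
    have h2 := h1.prod_fiberwise (g := fun p : ℕ × List ℕ => g u v w (p.1 :: p.2)) ?_
    · have := hasSum_list (g u v w) h2
      simpa [g] using this
    · rintro ⟨k, K⟩
      have h3 := h1.summable.prod_factor (k, K)
      have e : g u v w (k :: K) = ∑' i : ℕ,
          (c1 u k * (od i ^ k)⁻¹) * (wt u v w K * SR K i) := by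
        simp only [g, multTStar_cons, ← tsum_mul_right]
        exact tsum_congr fun i => by ring
      show HasSum _ (g u v w (k :: K))
      rw [e]
      exact h3.hasSum
  · have h1 := hasSum_c1 u (by linarith) j
    have h2 := hasSum_P u v w hu hv hw j
    have h3 := h1.mul h2 (summable_mul_of_summable_norm h1.summable.norm h2.summable.norm)
    exact h3

theorem wt_pos_list (u v w : ℝ) (K : List ℕ) (h : ∀ i ∈ K, 1 ≤ i) :
    ∃ a b c, K.sum = a + b + 2 * c ∧ K.length = b + c ∧
      K.countP (fun i => decide (2 ≤ i)) = c ∧ wt u v w K = u ^ a * v ^ b * w ^ c := by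
  induction K with
  | nil => exact ⟨0, 0, 0, by simp [wt]⟩
  | cons k K ih =>
    obtain ⟨a, b, c, h1, h2, h3, h4⟩ := ih fun i hi => h i (List.mem_cons_of_mem _ hi)
    have hk := h k List.mem_cons_self
    rcases k with _ | _ | k
    · omega
    · refine ⟨a, b + 1, c, ?_, ?_, ?_, ?_⟩
      · simp only [List.sum_cons]; omega
      · simp only [List.length_cons]; omega
      · simp [List.countP_cons, h3]
      · rw [wt_cons, h4]; simp only [wt1]; ring
    · refine ⟨a + k, b, c + 1, ?_, ?_, ?_, ?_⟩
      · simp only [List.sum_cons]; omega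
      · simp only [List.length_cons]; omega
      · simp [List.countP_cons, h3]
      · rw [wt_cons, h4]; simp only [wt1]; ring

theorem wt_zero_of (u v w : ℝ) (K : List ℕ) (h : ¬ ∀ i ∈ K, 1 ≤ i) : wt u v w K = 0 := by
  push Not at h
  obtain ⟨i, hi, h0⟩ := h
  have : i = 0 := by omega
  subst this
  unfold wt
  exact List.prod_eq_zero (List.mem_map.2 ⟨0, hi, rfl⟩)

theorem g_adm (u v w : ℝ) (K : List ℕ) (h : Admissible K) :
    ∃ a b c, K.sum = a + b + 2 * c + 2 ∧ K.length = b + c + 1 ∧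
      K.countP (fun i => decide (2 ≤ i)) = c + 1 ∧
      g u v w K = multTStar K * (u ^ a * v ^ b * w ^ c) := by
  obtain ⟨hp, hh⟩ := h
  rcases K with _ | ⟨k, K⟩
  · simp at hh
  · simp only [List.headI] at hh
    obtain ⟨a, b, c, h1, h2, h3, h4⟩ :=
      wt_pos_list u v w K fun i hi => hp i (List.mem_cons_of_mem _ hi)
    obtain ⟨k, rfl⟩ := Nat.exists_eq_add_of_le' hh
    refine ⟨a + k, b, c, ?_, ?_, ?_, ?_⟩
    · simp only [List.sum_cons]; omega
    · simp only [List.length_cons]; omega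
    · simp [List.countP_cons, h3]
    · simp only [g, h4, c1]; ring

theorem g_not_adm (u v w : ℝ) (K : List ℕ) (h : ¬ Admissible K) : g u v w K = 0 := by
  rcases K with _ | ⟨k, K⟩
  · rfl
  · by_cases hk : 2 ≤ k
    · have : ¬ ∀ i ∈ K, 1 ≤ i := by
        intro hK
        refine h ⟨fun i hi => ?_, hk⟩
        rcases List.mem_cons.1 hi with rfl | hi
        · omega
        · exact hK i hi
      simp [g, wt_zero_of u v w K this]
    · have : c1 u k = 0 := by
        rcases k with _ | _ | k
        · rfl
        · rfl
        · omega
      simp [g, this]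

def pr (K : List ℕ) : ℕ × ℕ × ℕ :=
  (K.sum - K.length - K.countP (fun i => decide (2 ≤ i)),
    K.length - K.countP (fun i => decide (2 ≤ i)), K.countP (fun i => decide (2 ≤ i)) - 1)

theorem fiber (u v w : ℝ) (p : ℕ × ℕ × ℕ) :
    ∑' K : (pr ⁻¹' {p} : Set (List ℕ)), g u v w K =
      G0hStar (p.1 + p.2.1 + 2 * p.2.2 + 2) (p.2.1 + p.2.2 + 1) (p.2.2 + 1)
          * u ^ p.1 * v ^ p.2.1 * w ^ p.2.2 := by
  classical
  rw [tsum_subtype (pr ⁻¹' {p}) (g u v w)]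
  unfold G0hStar
  rw [mul_assoc, mul_assoc, ← tsum_mul_right]
  refine tsum_congr fun K => ?_
  by_cases hK : Admissible K
  · obtain ⟨a, b, c, h1, h2, h3, h4⟩ := g_adm u v w K hK
    have hpr : pr K = (a, b, c) := by
      unfold pr
      rw [h1, h2, h3]
      refine Prod.ext ?_ (Prod.ext ?_ ?_) <;> simp <;> omega
    obtain ⟨a', b', c'⟩ := p
    by_cases he : (a, b, c) = (a', b', c')
    · have hm : K ∈ pr ⁻¹' {(a', b', c')} := by simp [hpr, ← he]
      rw [Set.indicator_of_mem hm, h4]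
      simp only [Prod.mk.injEq] at he
      obtain ⟨rfl, rfl, rfl⟩ := he
      rw [if_pos ⟨hK, h1, h2, h3⟩]
      ring
    · have hm : K ∉ pr ⁻¹' {(a', b', c')} := by
        intro hm
        exact he (hpr.symm.trans hm)
      rw [Set.indicator_of_notMem hm, if_neg, zero_mul]
      rintro ⟨-, e1, e2, e3⟩
      apply he
      simp only at e1 e2 e3
      have : c = c' := by omega
      have : b = b' := by omega
      have : a = a' := by omega
      simp [*]
  · rw [if_neg (fun h => hK h.1), zero_mul]
    by_cases hm : K ∈ pr ⁻¹' {p}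
    · rw [Set.indicator_of_mem hm, g_not_adm u v w K hK]
    · rw [Set.indicator_of_notMem hm]

/-- The quadratic `m² - (u+v) m + uv - w` at `m = 2j+1`. -/
noncomputable def q (u v w : ℝ) (j : ℕ) : ℝ := od j ^ 2 - (u + v) * od j + u * v - w

theorem q_pos (u v w : ℝ) (hu : |u| < 1 / 10) (hv : |v| < 1 / 10)
    (hw : |w| < 1 / 10) (j : ℕ) : 0 < q u v w j := by
  have h1 := one_le_od j
  have := abs_lt.1 hu
  have := abs_lt.1 hv
  have := abs_lt.1 hw
  unfold q
  have : 9 / 10 * (9 / 10) ≤ (od j - u) * (od j - v) :=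
    mul_le_mul (by linarith) (by linarith) (by norm_num) (by linarith)
  nlinarith

theorem one_sub_x (u v w : ℝ) (hu : |u| < 1 / 10) (j : ℕ) :
    1 - x u v w j = q u v w j * y u j := by
  have h1 := one_le_od j
  have h0 := od_pos j
  have := abs_lt.1 hu
  have hne : od j - u ≠ 0 := by linarith
  unfold x q y
  field_simp
  ring

theorem yP_zero (u v w : ℝ) (hu : |u| < 1 / 10) (hv : |v| < 1 / 10)
    (hw : |w| < 1 / 10) : y u 0 * P u v w 0 = (q u v w 0)⁻¹ := by
  have h := P_zero u v w hu hv hw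
  rw [one_sub_x u v w hu] at h
  exact eq_inv_of_mul_eq_one_left (by linarith)

theorem yP_succ (u v w : ℝ) (hu : |u| < 1 / 10) (hv : |v| < 1 / 10)
    (hw : |w| < 1 / 10) (j : ℕ) :
    y u (j + 1) * P u v w (j + 1) =
      y u j * P u v w j * (od j * (od j - u) / q u v w (j + 1)) := by
  have h := P_succ u v w hu hv hw j
  rw [one_sub_x u v w hu] at h
  have hq := (q_pos u v w hu hv hw (j + 1)).ne'
  have h1 := one_le_od j
  have h0 := od_pos j
  have := abs_lt.1 hu
  have hne : od j - u ≠ 0 := by linarith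
  have hy : y u j * (od j * (od j - u)) = 1 := by
    unfold y; field_simp
  rw [mul_div_assoc', eq_div_iff hq, ← h]
  linear_combination (- P u v w (j + 1) * (q u v w (j + 1) * y u (j + 1))) * hy

theorem frac (A B C D E F a b c d e f : ℂ) :
    A * a * (B * b) * (C * c) / (d * D * (E * e) * (F * f)) =
      A * B * C / (D * E * F) * (a * b * c / (d * e * f)) := by
  rw [div_mul_div_comm]
  congr 1 <;> ring

theorem term_eq (u v w : ℝ) (hu : |u| < 1 / 10) (hv : |v| < 1 / 10)
    (hw : |w| < 1 / 10) (αs βs : ℂ) (h1 : αs + βs = 3 - (u : ℂ) / 2 - (v : ℂ) / 2)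
    (h2 : αs * βs = (9 - 3 * (u : ℂ) - 3 * (v : ℂ) + (u : ℂ) * (v : ℂ) - (w : ℂ)) / 4)
    (j : ℕ) :
    ((y u j * P u v w j : ℝ) : ℂ) = (1 - (u : ℂ) - (v : ℂ) + (u : ℂ) * (v : ℂ) - (w : ℂ))⁻¹ *
      (poch ((1 - (u : ℂ)) / 2) j * poch (1 / 2) j * poch 1 j /
        ((j.factorial : ℂ) * poch αs j * poch βs j) * 1 ^ j) := by
  induction j with
  | zero =>
    rw [yP_zero u v w hu hv hw]
    simp only [poch, q, od]
    simp
    ring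
  | succ j ih =>
    have hq : ((q u v w (j + 1) : ℝ) : ℂ) ≠ 0 :=
      Complex.ofReal_ne_zero.2 (q_pos u v w hu hv hw (j + 1)).ne'
    have hq2 : (αs + j) * (βs + j) = (q u v w (j + 1) : ℂ) / 4 := by
      simp only [q, od]
      push_cast
      linear_combination (j : ℂ) * h1 + h2
    have hqe : (q u v w (j + 1) : ℂ) = 4 * ((αs + j) * (βs + j)) := by rw [hq2]; ring
    have hj : ((j : ℂ) + 1) ≠ 0 := Nat.cast_add_one_ne_zero j
    rw [yP_succ u v w hu hv hw, Complex.ofReal_mul, ih]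
    simp only [poch, Finset.prod_range_succ, Nat.factorial_succ, one_pow, mul_one]
    rw [mul_assoc]
    congr 1
    rw [Complex.ofReal_div, hqe]
    have hab : (αs + j) ≠ 0 ∧ (βs + j) ≠ 0 := by
      rw [hqe] at hq
      constructor <;> intro h <;> simp [h] at hq
    simp only [od, Nat.cast_mul, Nat.cast_add, Nat.cast_one]
    push_cast
    rw [frac]
    congr 1
    obtain ⟨ha, hb⟩ := hab
    field_simp
    ring

end OZ

/-- Ohno–Zagier type relation for multiple `t`-star values (Theorem 1.2):
the generating function of the sums `G₀*(k,n,s)` of multiple `t`-star values of fixed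
weight `k`, depth `n` and height `s` equals
`(1/(1-u-v+uv-w)) ⬝ ₃F₂((1-u)/2, 1/2, 1; α*, β*; 1)` where
`α* + β* = 3 - u/2 - v/2` and `α*β* = (9 - 3u - 3v + uv - w)/4`. -/
theorem ohno_zagier_multiple_t_star :
    ∃ δ > (0 : ℝ), ∀ u v w : ℝ, |u| < δ → |v| < δ → |w| < δ →
      Summable (fun p : ℕ × ℕ × ℕ =>
        G0hStar (p.1 + p.2.1 + 2 * p.2.2 + 2) (p.2.1 + p.2.2 + 1) (p.2.2 + 1)
          * u ^ p.1 * v ^ p.2.1 * w ^ p.2.2) ∧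
      ∀ αs βs : ℂ, αs + βs = 3 - (u : ℂ) / 2 - (v : ℂ) / 2 →
        αs * βs = (9 - 3 * (u : ℂ) - 3 * (v : ℂ) + (u : ℂ) * (v : ℂ) - (w : ℂ)) / 4 →
        ((∑' p : ℕ × ℕ × ℕ,
            G0hStar (p.1 + p.2.1 + 2 * p.2.2 + 2) (p.2.1 + p.2.2 + 1) (p.2.2 + 1)
              * u ^ p.1 * v ^ p.2.1 * w ^ p.2.2) : ℂ)
          = (1 - (u : ℂ) - (v : ℂ) + (u : ℂ) * (v : ℂ) - (w : ℂ))⁻¹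
              * hyp3F2 ((1 - (u : ℂ)) / 2) (1 / 2) 1 αs βs 1 := by

  refine ⟨1 / 10, by norm_num, fun u v w hu hv hw => ?_⟩
  obtain ⟨a, hg, hP⟩ := OZ.hasSum_g u v w hu hv hw
  have hf := hg.tsum_fiberwise OZ.pr
  simp only [OZ.fiber] at hf
  refine ⟨hf.summable, fun αs βs h1 h2 => ?_⟩
  have hc := Complex.hasSum_ofReal.2 hf
  have hPc := Complex.hasSum_ofReal.2 hP
  push_cast at hc
  rw [hc.tsum_eq, ← hPc.tsum_eq]
  unfold hyp3F2
  rw [← tsum_mul_left]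
  exact tsum_congr fun j => OZ.term_eq u v w hu hv hw αs βs h1 h2 j
end

section
/- There exists δ > 0 such that for all real u, v with |u|, |v| < δ, the series ∑_{k ≥ n+1, n ≥ 1} t(k−n+1, {1}^{n−1}) u^{k−n−1} v^{n−1} converges absolutely and equals (1/(1−u)) · ₃F₂((1−u)/2, (1+v)/2, 1; (3−u)/2, 3/2; 1). -/
open scoped BigOperators

namespace HO

lemma hs_congr {α : Type*} {f g : α → ℝ} {a b : ℝ} (h : HasSum f a) (hf : ∀ x, g x = f x)
    (hb : b = a) : HasSum g b := by
  rw [hb, show g = f from funext hf]; exact h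

lemma hasSum_prod_nn {α β : Type*} {f : α × β → ℝ} (hf : ∀ x, 0 ≤ f x) {g : α → ℝ} {s : ℝ}
    (h1 : ∀ a, HasSum (fun b => f (a, b)) (g a)) (h2 : HasSum g s) : HasSum f s := by
  have hs : Summable f := by
    rw [summable_prod_of_nonneg (fun x => hf x)]
    refine ⟨fun a => (h1 a).summable, ?_⟩
    simp_rw [fun a => (h1 a).tsum_eq]
    exact h2.summable
  have := hs.hasSum.prod_fiberwise h1
  rw [h2.unique this]
  exact hs.hasSum

noncomputable def g (K : List ℕ) (M : ℕ) (m : Fin K.length → ℕ) : ℝ :=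
    if ((∀ i, Odd (m i)) ∧ (∀ i j : Fin K.length, i < j → m j < m i)) ∧ ∀ i, m i < M then
      ∏ i, ((m i : ℝ) ^ K.get i)⁻¹
    else 0

noncomputable def h (K : List ℕ) (m : Fin K.length → ℕ) : ℝ :=
    if (∀ i, Odd (m i)) ∧ (∀ i j : Fin K.length, i < j → m j < m i) then
      ∏ i, ((m i : ℝ) ^ K.get i)⁻¹
    else 0

lemma g_nonneg (K M m) : 0 ≤ g K M m := by
  unfold g; split_ifs
  · positivity
  · exact le_rfl

lemma h_nonneg (K m) : 0 ≤ h K m := by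
  unfold h; split_ifs
  · positivity
  · exact le_rfl

lemma cond_cons (n : ℕ) (j : ℕ) (m : Fin n → ℕ) :
    ((∀ i, Odd ((Fin.cons j m : Fin (n+1) → ℕ) i)) ∧ (∀ i i' : Fin (n+1), i < i' →
      (Fin.cons j m : Fin (n+1) → ℕ) i' < (Fin.cons j m : Fin (n+1) → ℕ) i)) ↔
    Odd j ∧ (((∀ i, Odd (m i)) ∧ (∀ i i' : Fin n, i < i' → m i' < m i)) ∧ ∀ i, m i < j) := by
  simp only [Fin.forall_fin_succ, Fin.cons_zero, Fin.cons_succ, Fin.succ_lt_succ_iff,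
    Fin.succ_pos, Fin.not_lt_zero, false_imp_iff, true_and,
    forall_const]
  tauto

lemma h_cons (k : ℕ) (K : List ℕ) (j : ℕ) (m : Fin K.length → ℕ) :
    h (k :: K) (Fin.cons j m : Fin (K.length+1) → ℕ) =
      if Odd j then ((j:ℝ)^k)⁻¹ * g K j m else 0 := by
  have := cond_cons K.length j m
  unfold h g
  simp only [List.length_cons]
  rw [if_congr this rfl rfl]
  simp only [Fin.prod_univ_succ]
  by_cases h1 : Odd j <;> simp [h1]

lemma g_cons (k : ℕ) (K : List ℕ) (M j : ℕ) (m : Fin K.length → ℕ) :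
    g (k :: K) M (Fin.cons j m : Fin (K.length+1) → ℕ) =
      if j < M then (if Odd j then ((j:ℝ)^k)⁻¹ * g K j m else 0) else 0 := by
  rw [← h_cons]
  unfold g h
  simp only [List.length_cons]
  have : (∀ i, (Fin.cons j m : Fin (K.length+1) → ℕ) i < M) ↔ (j < M ∧ ∀ i, m i < M) := by
    simp [Fin.forall_fin_succ]
  by_cases hc : ((∀ i, Odd ((Fin.cons j m : Fin (K.length+1) → ℕ) i)) ∧
      (∀ i i' : Fin (K.length+1), i < i' →
      (Fin.cons j m : Fin (K.length+1) → ℕ) i' < (Fin.cons j m : Fin (K.length+1) → ℕ) i))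
  · have hc' := (cond_cons _ _ _).1 hc
    by_cases hj : j < M
    · have h2 : (∀ i, (Fin.cons j m : Fin (K.length+1) → ℕ) i < M) :=
        this.2 ⟨hj, fun i => (hc'.2.2 i).trans hj⟩
      rw [if_pos hj, if_pos hc, if_pos ⟨hc, h2⟩]
    · rw [if_neg hj, if_neg]
      intro h; exact hj (this.1 h.2).1
  · rw [if_neg (fun h => hc h.1), if_neg hc, ite_self]

lemma hasSum_cons {n : ℕ} {f : (Fin (n+1) → ℕ) → ℝ} (hf : ∀ x, 0 ≤ f x) {q : ℕ → ℝ} {s : ℝ}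
    (h1 : ∀ j, HasSum (fun m : Fin n → ℕ => f (Fin.cons j m : Fin (n+1) → ℕ)) (q j))
    (h2 : HasSum q s) :
    HasSum f s := by
  rw [← (Fin.consEquiv (fun _ : Fin (n+1) => ℕ)).hasSum_iff]
  exact hasSum_prod_nn (fun x => hf _) h1 h2

lemma hasSum_odd {q : ℕ → ℝ} {s : ℝ} (h0 : ∀ j, ¬ Odd j → q j = 0)
    (h1 : HasSum (fun i => q (2*i+1)) s) : HasSum q s := by
  have inj : Function.Injective (fun i : ℕ => 2*i+1) := fun a b h => by simpa using h
  refine (inj.hasSum_iff ?_).1 h1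
  intro x hx
  apply h0
  rintro ⟨k, rfl⟩
  exact hx ⟨k, rfl⟩

noncomputable def e : ℕ → ℕ → ℝ
  | 0, _ => 1
  | n+1, N => ∑ j ∈ Finset.range N, (2*(j:ℝ)+1)⁻¹ * e n j

lemma e_nonneg (n N) : 0 ≤ e n N := by
  induction n generalizing N with
  | zero => simp [e]
  | succ n ih =>
    rw [e]; exact Finset.sum_nonneg fun j _ => mul_nonneg (by positivity) (ih j)

noncomputable def P (v : ℝ) (N : ℕ) : ℝ := ∏ j ∈ Finset.range N, (1 + v * (2*(j:ℝ)+1)⁻¹)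

lemma hasSum_e (v : ℝ) (N : ℕ) : HasSum (fun n => e n N * v^n) (P v N) := by
  induction N with
  | zero =>
    convert hasSum_single (f := fun n => e n 0 * v^n) 0 ?_ using 1
    · simp [P, e]
    · intro n hn
      obtain ⟨n, rfl⟩ := Nat.exists_eq_succ_of_ne_zero hn
      simp [e]
  | succ N ih =>
    have h1 := (hasSum_nat_add_iff' 1).2 ih
    have h2 := h1.add (ih.mul_left (v * (2*(N:ℝ)+1)⁻¹))
    rw [← hasSum_nat_add_iff' 1]
    convert h2 using 1
    · ext n
      simp only [e, Finset.sum_range_succ]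
      ring
    · simp only [P, Finset.prod_range_succ, Finset.range_one, Finset.sum_singleton, e]
      ring

lemma hasSum_g (n N : ℕ) : HasSum (g (List.replicate n 1) (2*N+1)) (e n N) := by
  induction n generalizing N with
  | zero =>
    have : g (List.replicate 0 1) (2*N+1) = fun _ => 1 := by
      ext m
      unfold g
      rw [if_pos]
      · exact Fin.prod_univ_zero (M := ℝ) _
      · exact ⟨⟨fun i => i.elim0, fun i => i.elim0⟩, fun i => i.elim0⟩
    rw [this, e]
    have : Unique (Fin (List.replicate 0 1).length → ℕ) := Pi.uniqueOfIsEmpty (α := Fin 0) _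
    exact hasSum_unique (fun _ : Fin (List.replicate 0 1).length → ℕ => (1:ℝ))
  | succ n ih =>
    rw [List.replicate_succ]
    refine hasSum_cons (n := (List.replicate n 1).length)
      (f := g (1 :: List.replicate n 1) (2*N+1)) (g_nonneg (1 :: List.replicate n 1) (2*N+1))
      (q := fun j => if j < 2*N+1 then (if Odd j then ((j:ℝ)^1)⁻¹ * e n (j/2) else 0) else 0)
      ?_ ?_
    · intro j
      simp_rw [g_cons]
      split_ifs with h1 h2
      · obtain ⟨k, rfl⟩ := h2
        have : (2*k+1)/2 = k := by omega
        rw [this]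
        exact (ih k).mul_left _
      · exact hasSum_zero
      · exact hasSum_zero
    · apply hasSum_odd
      · intro j hj; simp [hj]
      · rw [e]
        refine hs_congr (hasSum_sum_of_ne_finset_zero (s := Finset.range N) ?_) (fun _ => rfl) ?_
        rotate_left
        · apply Finset.sum_congr rfl
          intro j hj
          have hj := Finset.mem_range.1 hj
          have : (2*j+1)/2 = j := by omega
          rw [if_pos (by omega), if_pos ⟨j, rfl⟩, this]
          push_cast; simp
        · intro j hj
          have hj := mt Finset.mem_range.2 hj
          rw [if_neg (by omega)]

lemma multT_eq (a n : ℕ) (hs : Summable fun N : ℕ => ((2*(N:ℝ)+1)^(a+2))⁻¹ * e n N) :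
    multT ((a+2) :: List.replicate n 1) = ∑' N : ℕ, ((2*(N:ℝ)+1)^(a+2))⁻¹ * e n N := by
  have : HasSum (h ((a+2) :: List.replicate n 1))
      (∑' N : ℕ, ((2*(N:ℝ)+1)^(a+2))⁻¹ * e n N) := by
    refine hasSum_cons (n := (List.replicate n 1).length)
      (f := h ((a+2) :: List.replicate n 1)) (h_nonneg ((a+2) :: List.replicate n 1))
      (q := fun j => (if Odd j then ((j:ℝ)^(a+2))⁻¹ * e n (j/2) else 0))
      ?_ ?_
    · intro j
      simp_rw [h_cons]
      split_ifs with h2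
      · obtain ⟨k, rfl⟩ := h2
        have : (2*k+1)/2 = k := by omega
        rw [this]
        exact (hasSum_g n k).mul_left _
      · exact hasSum_zero
    · apply hasSum_odd
      · intro j hj; simp [hj]
      · refine hs_congr hs.hasSum ?_ rfl
        intro j
        have : (2*j+1)/2 = j := by omega
        rw [if_pos ⟨j, rfl⟩, this]
        push_cast; rfl
  exact this.tsum_eq

lemma P_sq (v : ℝ) (hv : 0 ≤ v) (hv' : v ≤ 1/2) (N : ℕ) : (P v N)^2 ≤ 2*N+1 := by
  induction N with
  | zero => simp [P]
  | succ N ih =>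
    rw [P, Finset.prod_range_succ, ← P, mul_pow]
    have : (1 + v * (2*(N:ℝ)+1)⁻¹)^2 ≤ (2*N+3)/(2*N+1) := by
      have hN : (0:ℝ) ≤ N := by positivity
      rw [← div_eq_mul_inv, show 1 + v/(2*(N:ℝ)+1) = (2*N+1+v)/(2*N+1) by field_simp, div_pow,
        div_le_div_iff₀ (by positivity) (by positivity)]
      nlinarith [mul_nonneg hN hv, mul_nonneg hN hN, mul_nonneg hN (mul_nonneg hN hN), mul_nonneg hN (sub_nonneg.2 hv'), mul_nonneg (mul_nonneg hN hN) (sub_nonneg.2 hv'), mul_nonneg hv (sub_nonneg.2 hv'), mul_nonneg hN (mul_nonneg hv (sub_nonneg.2 hv'))]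
    calc _ ≤ (2*(N:ℝ)+1) * ((2*N+3)/(2*N+1)) := by gcongr
      _ = _ := by push_cast; field_simp; ring

lemma P_nonneg (v : ℝ) (hv : 0 ≤ v) (N : ℕ) : 0 ≤ P v N :=
  Finset.prod_nonneg fun j _ => by positivity

lemma geo (u : ℝ) (hu : |u| ≤ 1/2) (N : ℕ) :
    HasSum (fun a : ℕ => ((2*(N:ℝ)+1)^(a+2))⁻¹ * u^a)
      ((2*(N:ℝ)+1)⁻¹ * (2*(N:ℝ)+1-u)⁻¹) := by
  have hN : (0:ℝ) ≤ N := by positivity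
  have hu2 := abs_le.1 hu
  have h : HasSum (fun a : ℕ => (u/(2*(N:ℝ)+1))^a) (1 - u/(2*(N:ℝ)+1))⁻¹ := by
    apply hasSum_geometric_of_norm_lt_one
    rw [Real.norm_eq_abs, abs_div, abs_of_pos (by positivity : (0:ℝ) < 2*N+1),
      div_lt_one (by positivity)]
    linarith
  refine hs_congr (h.mul_left (((2*(N:ℝ)+1)^2)⁻¹)) ?_ ?_
  · intro a
    rw [div_pow, pow_add]; field_simp
  · have : 2*(N:ℝ)+1-u ≠ 0 := by linarith
    have h3 : 1 - u/(2*(N:ℝ)+1) = (2*(N:ℝ)+1-u)/(2*N+1) := by field_simp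
    rw [h3]
    field_simp

noncomputable def F (u v : ℝ) (x : ℕ × (ℕ × ℕ)) : ℝ :=
  ((2*(x.1:ℝ)+1)^(x.2.1+2))⁻¹ * u^x.2.1 * (e x.2.2 x.1 * v^x.2.2)

lemma abs_F (u v x) : |F u v x| = F |u| |v| x := by
  unfold F
  rw [abs_mul, abs_mul, abs_mul, abs_pow, abs_pow, abs_of_nonneg (e_nonneg _ _),
    abs_of_nonneg (by positivity : (0:ℝ) ≤ ((2*(x.1:ℝ)+1)^(x.2.1+2))⁻¹)]

lemma F_inner_nn (u v : ℝ) (hu0 : 0 ≤ u) (hv0 : 0 ≤ v) (hu : |u| ≤ 1/2) (N : ℕ) :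
    HasSum (fun p : ℕ × ℕ => F u v (N, p)) ((2*(N:ℝ)+1)⁻¹ * (2*(N:ℝ)+1-u)⁻¹ * P v N) := by
  refine hasSum_prod_nn (g := fun a => ((2*(N:ℝ)+1)^(a+2))⁻¹ * u^a * P v N) ?_ ?_ ?_
  · intro x
    have := e_nonneg x.2 N
    unfold F; positivity
  · intro a
    exact (hasSum_e v N).mul_left _
  · exact (geo u hu N).mul_right _

lemma F_summable_nn (u v : ℝ) (hu0 : 0 ≤ u) (hv0 : 0 ≤ v) (hu : u ≤ 1/2) (hv : v ≤ 1/2) :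
    Summable (F u v) := by
  have hu1 : |u| ≤ 1/2 := by rwa [abs_of_nonneg hu0]
  have hs : Summable fun N : ℕ => (2*(N:ℝ)+1)⁻¹ * (2*(N:ℝ)+1-u)⁻¹ * P v N := by
    have h0 : Summable fun N : ℕ => 2 * (1 / |(N:ℝ) + 1| ^ (3/2:ℝ)) :=
      ((Real.summable_one_div_nat_add_rpow 1 (3/2)).2 (by norm_num)).mul_left 2
    refine Summable.of_nonneg_of_le ?_ ?_ h0
    · intro N
      have hN : (0:ℝ) ≤ N := by positivity
      have := P_nonneg v hv0 N
      have h2 : 0 ≤ 2*(N:ℝ)+1-u := by linarith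
      positivity
    · intro N
      have hN : (0:ℝ) ≤ N := by positivity
      have hP : P v N ≤ Real.sqrt (2*N+1) := Real.le_sqrt_of_sq_le (P_sq v hv0 hv N)
      have h2 : (2*(N:ℝ)+1-u)⁻¹ ≤ 2 * (2*(N:ℝ)+1)⁻¹ := by
        rw [← div_eq_mul_inv, inv_le_comm₀ (by linarith) (by positivity), inv_div]
        linarith
      calc (2*(N:ℝ)+1)⁻¹ * (2*(N:ℝ)+1-u)⁻¹ * P v N
          ≤ (2*(N:ℝ)+1)⁻¹ * (2 * (2*(N:ℝ)+1)⁻¹) * Real.sqrt (2*N+1) := by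
            have := P_nonneg v hv0 N
            gcongr
        _ = 2 * (1 / (2*(N:ℝ)+1) ^ (3/2:ℝ)) := by
            have hp : (0:ℝ) < 2*N+1 := by positivity
            rw [show (3/2:ℝ) = 2 - 1/2 by norm_num, Real.rpow_sub hp, ← Real.sqrt_eq_rpow]
            rw [show (2*(N:ℝ)+1)^(2:ℝ) = (2*(N:ℝ)+1)^(2:ℕ) from Real.rpow_two _]
            field_simp
        _ ≤ _ := by
            rw [abs_of_pos (by positivity)]
            gcongr
            linarith
  exact (hasSum_prod_nn (fun x => by
    have := e_nonneg x.2.2 x.1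
    unfold F; positivity) (F_inner_nn u v hu0 hv0 hu1) hs.hasSum).summable

lemma F_summable (u v : ℝ) (hu : |u| ≤ 1/2) (hv : |v| ≤ 1/2) : Summable (F u v) := by
  rw [← summable_abs_iff]
  simp_rw [abs_F]
  exact F_summable_nn _ _ (abs_nonneg _) (abs_nonneg _) hu hv

lemma e_summable (a n : ℕ) : Summable fun N : ℕ => ((2*(N:ℝ)+1)^(a+2))⁻¹ * e n N := by
  have h := F_summable_nn (1/2) (1/2) (by norm_num) (by norm_num) le_rfl le_rfl
  have h1 := (h.prod_symm.prod_factor (a, n)).mul_left (2^a*2^n)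
  refine (summable_congr fun N => ?_).1 h1
  simp only [F, Prod.swap, one_div, inv_pow]
  field_simp

lemma F_fiber (u v : ℝ) (p : ℕ × ℕ) : HasSum (fun N => F u v (N, p))
    (multT ((p.1 + 2) :: List.replicate p.2 1) * u ^ p.1 * v ^ p.2) := by
  rw [multT_eq _ _ (e_summable _ _)]
  refine hs_congr (((e_summable p.1 p.2).hasSum.mul_right (u^p.1)).mul_right (v^p.2)) ?_ rfl
  intro N
  simp only [F]; ring

lemma F_inner (u v : ℝ) (hu : |u| ≤ 1/2) (hv : |v| ≤ 1/2) (N : ℕ) :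
    HasSum (fun p : ℕ × ℕ => F u v (N, p)) ((2*(N:ℝ)+1)⁻¹ * (2*(N:ℝ)+1-u)⁻¹ * P v N) := by
  have hs := (F_summable u v hu hv).prod_factor N
  have h1 := hs.hasSum.prod_fiberwise (g := fun a => ((2*(N:ℝ)+1)^(a+2))⁻¹ * u^a * P v N)
    (fun a => (hasSum_e v N).mul_left _)
  rw [((geo u hu N).mul_right (P v N)).unique h1]
  exact hs.hasSum

lemma real_main (u v : ℝ) (hu : |u| ≤ 1/2) (hv : |v| ≤ 1/2) :
    Summable (fun p : ℕ × ℕ =>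
        multT ((p.1 + 2) :: List.replicate p.2 1) * u ^ p.1 * v ^ p.2) ∧
      (∑' p : ℕ × ℕ, multT ((p.1 + 2) :: List.replicate p.2 1) * u ^ p.1 * v ^ p.2)
      = ∑' N : ℕ, (2*(N:ℝ)+1)⁻¹ * (2*(N:ℝ)+1-u)⁻¹ * P v N := by
  have hs := F_summable u v hu hv
  have h1 := hs.hasSum.prod_fiberwise (F_inner u v hu hv)
  have h2 := ((Equiv.prodComm _ _).hasSum_iff.2 hs.hasSum).prod_fiberwise (F_fiber u v)
  exact ⟨h2.summable, by rw [h2.tsum_eq, h1.tsum_eq]⟩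

lemma poch_shift (a : ℂ) (N : ℕ) : poch a N * (a + N) = a * poch (a+1) N := by
  induction N with
  | zero => simp [poch]
  | succ N ih =>
    have h1 : poch a (N+1) = poch a N * (a + N) := Finset.prod_range_succ _ _
    have h2 : poch (a+1) (N+1) = poch (a+1) N * (a + 1 + N) := Finset.prod_range_succ _ _
    rw [h1, h2, ih]; push_cast; ring

lemma poch_one (N : ℕ) : poch 1 N = N.factorial := by
  induction N with
  | zero => simp [poch]
  | succ N ih =>
    have h1 : poch 1 (N+1) = poch 1 N * (1 + N) := Finset.prod_range_succ _ _
    rw [h1, ih, Nat.factorial_succ]; push_cast; ring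

lemma poch_P (v : ℝ) (N : ℕ) : poch ((1+(v:ℂ))/2) N = poch (1/2) N * (P v N : ℝ) := by
  unfold poch P
  push_cast
  rw [← Finset.prod_mul_distrib]
  apply Finset.prod_congr rfl
  intro i _
  have : (2*(i:ℂ)+1) ≠ 0 := by exact_mod_cast (by positivity : (2*(i:ℝ)+1) ≠ 0)
  field_simp
  ring

lemma poch_ne (a : ℝ) (ha : 0 < a) (N : ℕ) : poch (a:ℂ) N ≠ 0 := by
  unfold poch
  apply Finset.prod_ne_zero_iff.2
  intro i _
  exact_mod_cast (by positivity : a + i ≠ 0)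

end HO

/-- Generating function of height-one multiple `t`-values (Corollary 2.1). -/
theorem height_one_multiple_t :
    ∃ δ > (0 : ℝ), ∀ u v : ℝ, |u| < δ → |v| < δ →
      Summable (fun p : ℕ × ℕ =>
        multT ((p.1 + 2) :: List.replicate p.2 1) * u ^ p.1 * v ^ p.2) ∧
      ((∑' p : ℕ × ℕ,
          multT ((p.1 + 2) :: List.replicate p.2 1) * u ^ p.1 * v ^ p.2 : ℝ) : ℂ)
        = (1 - (u : ℂ))⁻¹ *
            hyp3F2 ((1 - (u : ℂ)) / 2) ((1 + (v : ℂ)) / 2) 1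
              ((3 - (u : ℂ)) / 2) (3 / 2) 1 := by
  refine ⟨1/2, by norm_num, fun u v hu hv => ?_⟩
  obtain ⟨h1, h2⟩ := HO.real_main u v hu.le hv.le
  refine ⟨h1, ?_⟩
  rw [h2, hyp3F2, ← tsum_mul_left, Complex.ofReal_tsum]
  congr 1
  ext N
  have hu2 := abs_lt.1 hu
  have hN : (0:ℝ) ≤ N := by positivity
  have a1 : (1 - (u:ℂ)) ≠ 0 := by exact_mod_cast (by linarith : 1 - u ≠ 0)
  have a2 : (2*(N:ℂ)+1-u) ≠ 0 := by exact_mod_cast (by linarith : 2*(N:ℝ)+1-u ≠ 0)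
  have a3 : (2*(N:ℂ)+1) ≠ 0 := by exact_mod_cast (by positivity : 2*(N:ℝ)+1 ≠ 0)
  have a4 : (N.factorial:ℂ) ≠ 0 := by exact_mod_cast N.factorial_ne_zero
  have b1 : poch ((3-(u:ℂ))/2) N ≠ 0 := by
    have := HO.poch_ne ((3-u)/2) (by linarith) N
    push_cast at this; exact this
  have b2 : poch (3/2) N ≠ 0 := by
    have := HO.poch_ne (3/2) (by norm_num) N
    push_cast at this; exact this
  have s1 := HO.poch_shift ((1-(u:ℂ))/2) N
  have s2 := HO.poch_shift (1/2) N
  rw [show (1-(u:ℂ))/2 + 1 = (3-u)/2 by ring] at s1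
  rw [show (1/2:ℂ) + 1 = 3/2 by norm_num] at s2
  have t1 : poch ((1-(u:ℂ))/2) N = (1-u) * (2*(N:ℂ)+1-u)⁻¹ * poch ((3-(u:ℂ))/2) N := by
    field_simp
    linear_combination 2 * s1
  have t2 : poch (1/2) N = (2*(N:ℂ)+1)⁻¹ * poch (3/2) N := by
    field_simp
    linear_combination 2 * s2
  rw [HO.poch_P, HO.poch_one, t1, t2]
  push_cast
  field_simp
  simp
end

section
/- There exists δ > 0 such that for all real u, w with |u|, |w| < δ, 1 + ∑_{k ≥ 2n, n ≥ 1} G_0(k,n,n) u^{k−2n} w^n = exp( ∑_{n ≥ 2} (t(n)/n)(u^n − x^n − y^n) ), where x and y are the two (possibly complex) roots of X² − uX + w = 0 (so x + y = u and xy = w; the quantity x^n + y^n is real), and both series converge absolutely. -/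
open scoped BigOperators

theorem mh_pi (n : ℕ) : ∀ f : Fin n → ℕ → ℝ, (∀ i, Summable (fun k => ‖f i k‖)) →
    Summable (fun e : Fin n → ℕ => ‖∏ i, f i (e i)‖) ∧
    HasSum (fun e : Fin n → ℕ => ∏ i, f i (e i)) (∏ i, ∑' k, f i k) := by
  induction n with
  | zero =>
    intro f _
    refine ⟨(hasSum_fintype _).summable, ?_⟩
    convert hasSum_fintype (fun e : Fin 0 → ℕ => ∏ i, f i (e i)) using 1
    simp
  | succ n ih =>
    intro f hf
    obtain ⟨h1, h2⟩ := ih (fun i => f i.succ) (fun i => hf _)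
    have hs := summable_mul_of_summable_norm (hf 0) h1
    have hsn : Summable (fun x : ℕ × (Fin n → ℕ) => ‖f 0 x.1 * ∏ i, f i.succ (x.2 i)‖) := by
      simpa only [norm_mul] using
        (hf 0).mul_of_nonneg h1 (fun _ => norm_nonneg _) (fun _ => norm_nonneg _)
    have hh := (hf 0).of_norm.hasSum.mul h2 hs
    let E := Fin.consEquiv (fun _ : Fin (n+1) => ℕ)
    constructor
    · rw [← E.summable_iff]
      refine hsn.congr fun x => ?_
      simp [E, Fin.consEquiv, Fin.prod_univ_succ]
    · rw [← E.hasSum_iff, Fin.prod_univ_succ]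
      have hx : ((fun e : Fin (n + 1) → ℕ => ∏ i, f i (e i)) ∘ E) =
          fun x : ℕ × (Fin n → ℕ) => f 0 x.1 * ∏ i, f i.succ (x.2 i) := by
        funext x
        simp [E, Fin.consEquiv, Fin.prod_univ_succ]
      rw [hx]
      exact hh

abbrev MHD := Σ n : ℕ, {m : Fin n → ℕ // StrictAnti m}

theorem mh_equiv : ∃ E : MHD ≃ Finset ℕ, ∀ (d : MHD) (g : ℕ → ℝ),
    ∏ i ∈ E d, g i = ∏ i, g (d.2.1 i) := by
  let φ : MHD → Finset ℕ := fun d => Finset.univ.image d.2.1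
  have hφ : Function.Bijective φ := by
    constructor
    · rintro ⟨n, m, hm⟩ ⟨n', m', hm'⟩ h
      simp only [φ] at h
      have hc : n = n' := by
        have := congrArg Finset.card h
        simpa [Finset.card_image_of_injective, hm.injective, hm'.injective] using this
      subst hc
      have hr : Set.range m = Set.range m' := by
        have := congrArg (fun s : Finset ℕ => (s : Set ℕ)) h
        simpa using this
      have h1 : StrictMono (OrderDual.toDual ∘ m) := hm.dual_right
      have h2 : StrictMono (OrderDual.toDual ∘ m') := hm'.dual_right
      have : OrderDual.toDual ∘ m = OrderDual.toDual ∘ m' := by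
        rw [← h1.range_inj h2, Set.range_comp, Set.range_comp, hr]
      have : m = m' := this
      subst this
      rfl
    · intro s
      let s' : Finset ℕᵒᵈ := s.image OrderDual.toDual
      refine ⟨⟨s'.card, fun i => OrderDual.ofDual (s'.orderEmbOfFin rfl i), ?_⟩, ?_⟩
      · intro i j h
        exact (s'.orderEmbOfFin rfl).strictMono h
      · ext x
        have := Set.ext_iff.1 (s'.range_orderEmbOfFin rfl) (OrderDual.toDual x)
        simp only [Set.mem_range, s'] at this
        simp only [φ, Finset.mem_image, Finset.mem_univ, true_and]
        refine Iff.trans ?_ (this.trans ?_)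
        · rfl
        · simp
  refine ⟨Equiv.ofBijective φ hφ, fun d g => ?_⟩
  simp only [Equiv.ofBijective_apply, φ]
  rw [Finset.prod_image]
  exact fun a _ b _ h => d.2.2.injective h

theorem mh_multT {n : ℕ} (g : Fin n → ℕ) : multT (List.ofFn g) =
    ∑' m : {m : Fin n → ℕ // StrictAnti m}, ∏ i, (((2 * (m.1 i) + 1 : ℕ) : ℝ) ^ g i)⁻¹ := by
  have hl : (List.ofFn g).length = n := List.length_ofFn
  unfold multT
  let φ : {m : Fin n → ℕ // StrictAnti m} → (Fin (List.ofFn g).length → ℕ) :=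
    fun m i => 2 * m.1 (Fin.cast hl i) + 1
  have hinj : Function.Injective φ := by
    intro a b h
    ext i
    have := congrFun h (Fin.cast hl.symm i)
    simpa [φ] using this
  rw [← hinj.tsum_eq]
  · refine tsum_congr fun m => ?_
    rw [if_pos]
    · refine Fintype.prod_equiv (finCongr hl) _ _ fun i => ?_
      simp only [φ, List.get_ofFn]
      rfl
    · refine ⟨fun i => ⟨_, rfl⟩, fun i j hij => ?_⟩
      have : m.1 (Fin.cast hl j) < m.1 (Fin.cast hl i) := m.2 (by simpa using hij)
      simp only [φ]; omega
  · intro m hm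
    rw [Function.mem_support] at hm
    have hc := (ite_ne_right_iff.1 hm).1
    choose q hq using hc.1
    refine ⟨⟨fun i => q (Fin.cast hl.symm i), ?_⟩, ?_⟩
    · intro i j hij
      have := hc.2 (Fin.cast hl.symm i) (Fin.cast hl.symm j) (by simpa using hij)
      rw [hq, hq (Fin.cast hl.symm i)] at this
      show q _ < q _
      omega
    · funext i
      simp [φ, ← hq]

theorem mh_G0h (a n : ℕ) : G0h (a + 2 * n + 2) (n + 1) (n + 1) =
    ∑' e : {e : Fin (n + 1) → ℕ // ∑ i, e i = a}, multT (List.ofFn (fun i => e.1 i + 2)) := by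
  unfold G0h
  let φ : {e : Fin (n + 1) → ℕ // ∑ i, e i = a} → List ℕ := fun e => List.ofFn (fun i => e.1 i + 2)
  have hinj : Function.Injective φ := by
    intro a b h
    ext i
    have := congrFun (List.ofFn_injective h) i
    simpa using this
  rw [← hinj.tsum_eq]
  · refine tsum_congr fun e => ?_
    rw [if_pos]
    refine ⟨⟨?_, ?_⟩, ?_, ?_, ?_⟩
    · simp only [φ, List.forall_mem_ofFn_iff]; intro i; omega
    · simp [φ, List.ofFn_succ]
    · simp only [φ, List.sum_ofFn, Finset.sum_add_distrib, e.2]; simp; ring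
    · simp [φ]
    · have : (φ e).countP (fun i => decide (2 ≤ i)) = (φ e).length := by
        rw [List.countP_eq_length]
        simp only [φ, List.forall_mem_ofFn_iff]; simp
      rw [this]; simp [φ]
  · intro K hK
    rw [Function.mem_support] at hK
    obtain ⟨-, hs, hl, hc⟩ := (ite_ne_right_iff.1 hK).1
    have h2 : ∀ i ∈ K, 2 ≤ i := by
      have := List.countP_eq_length.1 (hc.trans hl.symm)
      simpa using this
    obtain ⟨g, rfl⟩ : ∃ g : Fin (n+1) → ℕ, K = List.ofFn g := by
      exact ⟨_, (List.ofFn_get K).symm.trans (List.ofFn_congr hl _)⟩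
    rw [List.forall_mem_ofFn_iff] at h2
    choose q hq using fun i => Nat.exists_eq_add_of_le' (h2 i)
    refine ⟨⟨q, ?_⟩, ?_⟩
    · simp only [List.sum_ofFn, hq, Finset.sum_add_distrib] at hs
      simp at hs; omega
    · simp only [φ]; congr 1; funext i; exact (hq i).symm

noncomputable def mhc (u w : ℝ) (m e : ℕ) : ℝ := w * u ^ e * (((2 * m + 1 : ℕ) : ℝ) ^ (e + 2))⁻¹

noncomputable def mhg (u w : ℝ) (m : ℕ) : ℝ :=
  w / (((2 * m + 1 : ℕ) : ℝ) * (((2 * m + 1 : ℕ) : ℝ) - u))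

theorem mh_c_sum (u w : ℝ) (hu : |u| < 1 / 4) (m : ℕ) : HasSum (mhc u w m) (mhg u w m) := by
  have hM : (1 : ℝ) ≤ ((2 * m + 1 : ℕ) : ℝ) := by exact_mod_cast Nat.le_add_left 1 (2 * m)
  set M : ℝ := ((2 * m + 1 : ℕ) : ℝ)
  have h0 : M ≠ 0 := by positivity
  have h1 : M - u ≠ 0 := by
    have := (abs_lt.1 hu).2
    intro h; linarith
  have hr : |u / M| < 1 := by
    rw [abs_div, abs_of_pos (by linarith : 0 < M), div_lt_one (by linarith)]; linarith
  have h := (hasSum_geometric_of_abs_lt_one hr).mul_left (w * (M ^ 2)⁻¹)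
  have e1 : mhc u w m = fun e => w * (M ^ 2)⁻¹ * (u / M) ^ e := by
    funext e
    simp only [mhc]
    rw [div_pow, pow_add]
    change w * u ^ e * (M ^ e * M ^ 2)⁻¹ = _
    field_simp
  have e2 : mhg u w m = w * (M ^ 2)⁻¹ * (1 - u / M)⁻¹ := by
    change w / (M * (M - u)) = _
    have : 1 - u / M = (M - u) / M := by field_simp
    rw [this]
    field_simp
  rw [e1, e2]; exact h

theorem mh_norm (u w : ℝ) (m e : ℕ) : ‖mhc u w m e‖ = mhc |u| |w| m e := by
  simp only [mhc, norm_mul, norm_inv, norm_pow, Real.norm_eq_abs, Nat.abs_cast]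

theorem mh_sq : Summable (fun m : ℕ => 1 / (((2 * m + 1 : ℕ) : ℝ)) ^ 2) := by
  have h := (Real.summable_one_div_nat_pow (p := 2)).2 (by norm_num)
  exact h.comp_injective (i := fun m : ℕ => 2 * m + 1) (fun a b h => by simpa using h)

theorem mhg_nonneg (u w : ℝ) (hu : |u| < 1 / 4) (m : ℕ) : 0 ≤ mhg |u| |w| m := by
  have hM : (1 : ℝ) ≤ ((2 * m + 1 : ℕ) : ℝ) := by exact_mod_cast Nat.le_add_left 1 (2 * m)
  exact div_nonneg (abs_nonneg _) (mul_nonneg (by linarith) (by linarith))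

theorem mhg_summable (u w : ℝ) (hu : |u| < 1 / 4) : Summable (mhg |u| |w|) := by
  refine Summable.of_nonneg_of_le (mhg_nonneg u w hu) (fun m => ?_) (mh_sq.mul_left (2 * |w|))
  have hM : (1 : ℝ) ≤ ((2 * m + 1 : ℕ) : ℝ) := by exact_mod_cast Nat.le_add_left 1 (2 * m)
  simp only [mhg]
  set M : ℝ := ((2 * m + 1 : ℕ) : ℝ)
  rw [mul_one_div, div_le_div_iff₀ (mul_pos (by linarith) (by linarith)) (by positivity)]
  have : M ^ 2 ≤ 2 * (M * (M - |u|)) := by nlinarith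
  nlinarith [mul_le_mul_of_nonneg_left this (abs_nonneg w)]

noncomputable def mhF (u w : ℝ) (x : Σ d : MHD, (Fin d.1 → ℕ)) : ℝ :=
  ∏ i, mhc u w (x.1.2.1 i) (x.2 i)

theorem mhF_main (u w : ℝ) (hu : |u| < 1 / 4) :
    ∃ T, HasSum (mhF u w) T ∧ HasProd (fun m => 1 + mhg u w m) T := by
  obtain ⟨E, hE⟩ := mh_equiv
  have hcn : ∀ m, HasSum (fun e => ‖mhc u w m e‖) (mhg |u| |w| m) := by
    intro m
    simp only [mh_norm]
    exact mh_c_sum _ _ (by simpa using hu) m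
  have hpi := fun d : MHD => mh_pi d.1 (fun i => mhc u w (d.2.1 i)) (fun i => (hcn _).summable)
  have hpi' := fun d : MHD => mh_pi d.1 (fun i e => ‖mhc u w (d.2.1 i) e‖)
    (fun i => by simpa using (hcn _).summable)
  have hnormF : Summable (fun x => ‖mhF u w x‖) := by
    rw [summable_sigma_of_nonneg (fun _ => norm_nonneg _)]
    refine ⟨fun d => (hpi d).1, ?_⟩
    have h1 : ∀ d : MHD, ∑' e : Fin d.1 → ℕ, ‖mhF u w ⟨d, e⟩‖ = ∏ i ∈ E d, mhg |u| |w| i := by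
      intro d
      rw [hE]
      have := (hpi' d).2.tsum_eq
      simp only [(hcn _).tsum_eq] at this
      simpa only [mhF, norm_prod] using this
    simp only [h1]
    exact E.summable_iff.2
      (summable_finsetProd_of_summable_nonneg (mhg_nonneg u w hu) (mhg_summable u w hu))
  obtain ⟨T, hT⟩ := hnormF.of_norm
  refine ⟨T, hT, ?_⟩
  apply hasProd_one_add_of_hasSum_prod
  rw [← E.hasSum_iff]
  refine hT.sigma fun d => ?_
  have := (hpi d).2
  simp only [(mh_c_sum u w hu _).tsum_eq] at this
  simp only [Function.comp, hE]
  exact this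

theorem mhEq_aux (n : ℕ) (e : Fin n → ℕ) (a : ℕ) (he : ∑ i, e i = a)
    (m : {m : Fin n → ℕ // StrictAnti m}) :
    (⟨(∑ i, e i, n), ⟨e, rfl⟩, m⟩ : Σ p : ℕ × ℕ,
      {e : Fin p.2 → ℕ // ∑ i, e i = p.1} × {m : Fin p.2 → ℕ // StrictAnti m}) =
    ⟨(a, n), ⟨e, he⟩, m⟩ := by
  subst he
  rfl

def mhEq : (Σ d : MHD, (Fin d.1 → ℕ)) ≃
    (Σ p : ℕ × ℕ, {e : Fin p.2 → ℕ // ∑ i, e i = p.1} × {m : Fin p.2 → ℕ // StrictAnti m}) where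
  toFun x := ⟨(∑ i, x.2 i, x.1.1), ⟨x.2, rfl⟩, x.1.2⟩
  invFun y := ⟨⟨y.1.2, y.2.2⟩, y.2.1.1⟩
  left_inv := by rintro ⟨⟨n, m⟩, e⟩; rfl
  right_inv := by 
    rintro ⟨⟨a, n⟩, ⟨e, he⟩, m⟩
    exact mhEq_aux n e a he m

theorem mh_lhs (u w T : ℝ) (hT : HasSum (mhF u w) T) :
    HasSum (fun p : ℕ × ℕ =>
        G0h (p.1 + 2 * p.2 + 2) (p.2 + 1) (p.2 + 1) * u ^ p.1 * w ^ (p.2 + 1)) (T - 1) := by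
  have h1 : HasSum (mhF u w ∘ mhEq.symm) T := (mhEq.symm.hasSum_iff).2 hT
  have hs := h1.summable
  have h2 := h1.sigma fun p => (hs.sigma_factor p).hasSum
  have hp : ∀ (p : ℕ × ℕ) , ∑' c, (mhF u w ∘ mhEq.symm) ⟨p, c⟩ =
      ∑' e : {e : Fin p.2 → ℕ // ∑ i, e i = p.1}, u ^ p.1 * w ^ p.2 *
        multT (List.ofFn (fun i => e.1 i + 2)) := by
    intro p
    rw [(hs.sigma_factor p).tsum_prod]
    refine tsum_congr fun e => ?_
    rw [mh_multT, ← tsum_mul_left]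
    refine tsum_congr fun m => ?_
    change ∏ i, mhc u w (m.1 i) (e.1 i) = _
    simp only [mhc]
    rw [Finset.prod_mul_distrib, Finset.prod_mul_distrib, Finset.prod_pow_eq_pow_sum, e.2]
    simp [mul_comm]
  have h3 : HasSum (fun p : ℕ × ℕ => if p = (0, 0) then (1 : ℝ) else 0) 1 := hasSum_ite_eq _ _
  have h4 := h2.sub h3
  have hinj : Function.Injective (fun p : ℕ × ℕ => (p.1, p.2 + 1)) := by
    rintro ⟨a, b⟩ ⟨c, d⟩ h
    simpa using h
  rw [← hinj.hasSum_iff] at h4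
  · refine h4.congr_fun fun p => ?_
    simp only [Function.comp_apply]
    have := hp (p.1, p.2 + 1)
    simp only [Function.comp_apply] at this
    rw [this, tsum_mul_left, ← mh_G0h]
    simp
    ring
  · rintro ⟨a, n⟩ hx
    have hn : n = 0 := by
      by_contra h
      obtain ⟨k, rfl⟩ := Nat.exists_eq_succ_of_ne_zero h
      exact hx ⟨(a, k), rfl⟩
    subst hn
    rw [hp]
    dsimp only
    by_cases ha : a = 0
    · subst ha
      have h0 : ∀ e : {e : Fin 0 → ℕ // ∑ i, e i = 0}, e = ⟨fun _ => 0, by simp⟩ := by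
        rintro ⟨e, he⟩; ext i; exact i.elim0
      have h0' : ∀ e : {m : Fin 0 → ℕ // StrictAnti m},
          e = ⟨fun _ => 0, fun i => i.elim0⟩ := by
        rintro ⟨e, he⟩; ext i; exact i.elim0
      rw [tsum_eq_single ⟨fun _ => 0, by simp⟩ (fun b hb => absurd (h0 b) hb), mh_multT,
        tsum_eq_single ⟨fun _ => 0, fun i => i.elim0⟩ (fun b hb => absurd (h0' b) hb)]
      simp
    · have : IsEmpty {e : Fin 0 → ℕ // ∑ i, e i = a} := ⟨fun e => ha (by simpa using e.2.symm)⟩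
      rw [tsum_empty]
      simp [ha]

noncomputable def mhP (z : ℂ) (m n : ℕ) : ℂ := (z / ((2 * m + 1 : ℕ) : ℂ)) ^ (n + 2) / (n + 2)

theorem mhP_summable (z : ℂ) (hz : ‖z‖ < 1) : Summable (fun p : ℕ × ℕ => mhP z p.1 p.2) := by
  have h := mh_sq.mul_of_nonneg (summable_geometric_of_lt_one (norm_nonneg z) hz)
    (fun _ => by positivity) (fun _ => by positivity)
  refine Summable.of_norm_bounded h ?_
  rintro ⟨m, n⟩
  have hM : (1 : ℝ) ≤ ((2 * m + 1 : ℕ) : ℝ) := by exact_mod_cast Nat.le_add_left 1 (2 * m)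
  simp only [mhP, norm_div, norm_pow, Complex.norm_natCast]
  set M : ℝ := ((2 * m + 1 : ℕ) : ℝ)
  have h2 : ‖((n : ℂ) + 2)‖ = (n : ℝ) + 2 := by
    have : ((n : ℂ) + 2) = ((n + 2 : ℕ) : ℂ) := by push_cast; rfl
    rw [this, Complex.norm_natCast]; push_cast; rfl
  rw [h2]
  have hn : (0 : ℝ) ≤ n := Nat.cast_nonneg n
  have hz0 := norm_nonneg z
  have h3 : ‖z‖ / M ≤ ‖z‖ := div_le_self hz0 hM
  have h4 : ‖z‖ / M ≤ 1 / M := by gcongr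
  have h5 : 0 ≤ ‖z‖ / M := by positivity
  calc (‖z‖ / M) ^ (n + 2) / (n + 2) ≤ (‖z‖ / M) ^ (n + 2) :=
        div_le_self (by positivity) (by linarith)
    _ = (‖z‖ / M) ^ 2 * (‖z‖ / M) ^ n := by ring
    _ ≤ (1 / M) ^ 2 * ‖z‖ ^ n := by gcongr
    _ = 1 / M ^ 2 * ‖z‖ ^ n := by rw [one_div_pow]

theorem mhP_row (z : ℂ) (hz : ‖z‖ < 1) (m : ℕ) : HasSum (mhP z m)
    (-Complex.log (1 - z / ((2 * m + 1 : ℕ) : ℂ)) - z / ((2 * m + 1 : ℕ) : ℂ)) := by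
  have hM : (1 : ℝ) ≤ ((2 * m + 1 : ℕ) : ℝ) := by exact_mod_cast Nat.le_add_left 1 (2 * m)
  have hr : ‖z / ((2 * m + 1 : ℕ) : ℂ)‖ < 1 := by
    rw [norm_div, Complex.norm_natCast]
    exact (div_le_self (norm_nonneg z) hM).trans_lt hz
  have h := Complex.hasSum_taylorSeries_neg_log hr
  rw [← hasSum_nat_add_iff' 2] at h
  simp only [Finset.sum_range_succ, Finset.sum_range_zero] at h
  have e1 : mhP z m = fun n : ℕ => (z / ((2 * m + 1 : ℕ) : ℂ)) ^ (n + 2) / ((n + 2 : ℕ) : ℂ) := by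
    funext n; simp [mhP]
  have e2 : -Complex.log (1 - z / ((2 * m + 1 : ℕ) : ℂ)) - z / ((2 * m + 1 : ℕ) : ℂ) =
      -Complex.log (1 - z / ((2 * m + 1 : ℕ) : ℂ)) - (0 + (z / ((2 * m + 1 : ℕ) : ℂ)) ^ 0 /
        ((0 : ℕ) : ℂ) + (z / ((2 * m + 1 : ℕ) : ℂ)) ^ 1 / ((1 : ℕ) : ℂ)) := by
    simp
  rw [e1, e2]
  exact h

theorem mhP_col (z : ℂ) (n : ℕ) : HasSum (fun m => mhP z m n)
    (((tval (n + 2) : ℂ) / (n + 2)) * z ^ (n + 2)) := by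
  have hs : Summable (fun m : ℕ => 1 / (2 * (m : ℝ) + 1) ^ (n + 2)) := by
    have h := (Real.summable_one_div_nat_pow (p := n + 2)).2 (by omega)
    have := h.comp_injective (i := fun m : ℕ => 2 * m + 1) (fun a b h => by simpa using h)
    refine this.congr fun m => ?_
    simp
  have h1 : HasSum (fun m : ℕ => 1 / (2 * (m : ℝ) + 1) ^ (n + 2)) (tval (n + 2)) := hs.hasSum
  have h2 := (Complex.hasSum_ofReal.2 h1).mul_right (z ^ (n + 2) / (n + 2))
  have e1 : (fun m => mhP z m n) = fun m : ℕ =>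
      ((1 / (2 * (m : ℝ) + 1) ^ (n + 2) : ℝ) : ℂ) * (z ^ (n + 2) / (n + 2)) := by
    funext m
    simp only [mhP, div_pow]
    push_cast
    rw [div_div, div_mul_div_comm, one_mul]
  rw [e1, div_mul_eq_mul_div, mul_div_assoc]
  exact h2

theorem mhP_exists (z : ℂ) (hz : ‖z‖ < 1) : ∃ S : ℂ,
    HasSum (fun n : ℕ => ((tval (n + 2) : ℂ) / (n + 2)) * z ^ (n + 2)) S ∧
    HasSum (fun m : ℕ =>
      -Complex.log (1 - z / ((2 * m + 1 : ℕ) : ℂ)) - z / ((2 * m + 1 : ℕ) : ℂ)) S := by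
  obtain ⟨S, hS⟩ := mhP_summable z hz
  refine ⟨S, ?_, hS.prod_fiberwise (mhP_row z hz)⟩
  have := (Equiv.prodComm ℕ ℕ).hasSum_iff.2 hS
  exact this.prod_fiberwise (mhP_col z)

theorem mh_root (u w : ℝ) (hu : |u| < 1 / 4) (hw : |w| < 1 / 4) (x y : ℂ)
    (h1 : x + y = u) (h2 : x * y = w) : ‖x‖ < 1 := by
  have h : x ^ 2 = u * x - w := by rw [← h1, ← h2]; ring
  have h3 : ‖x‖ ^ 2 ≤ |u| * ‖x‖ + |w| := by
    rw [← norm_pow, h]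
    refine (norm_sub_le _ _).trans ?_
    rw [norm_mul, Complex.norm_real, Complex.norm_real]; rfl
  by_contra hx
  push Not at hx
  nlinarith

/-- Generating function of sums of multiple `t`-values of maximal height (Corollary 2.3):
`1 + ∑ G₀(k,n,n) u^(k-2n) w^n = exp(∑_{n≥2} (t(n)/n)(uⁿ - xⁿ - yⁿ))` where
`x + y = u` and `xy = w`. -/
theorem maximal_height_multiple_t :
    ∃ δ > (0 : ℝ), ∀ u w : ℝ, |u| < δ → |w| < δ →
      ∀ x y : ℂ, x + y = (u : ℂ) → x * y = (w : ℂ) →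
        Summable (fun p : ℕ × ℕ =>
        G0h (p.1 + 2 * p.2 + 2) (p.2 + 1) (p.2 + 1) * u ^ p.1 * w ^ (p.2 + 1)) ∧
        Summable (fun n : ℕ => ((tval (n + 2) : ℂ) / (n + 2)) *
          ((u : ℂ) ^ (n + 2) - x ^ (n + 2) - y ^ (n + 2))) ∧
        ((1 + (∑' p : ℕ × ℕ,
            G0h (p.1 + 2 * p.2 + 2) (p.2 + 1) (p.2 + 1) * u ^ p.1 * w ^ (p.2 + 1)) : ℝ) : ℂ)
          = Complex.exp (∑' n : ℕ, ((tval (n + 2) : ℂ) / (n + 2)) *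
              ((u : ℂ) ^ (n + 2) - x ^ (n + 2) - y ^ (n + 2))) := by
  refine ⟨1 / 4, by norm_num, fun u w hu hw x y hxy hxy' => ?_⟩
  obtain ⟨T, hT, hprod⟩ := mhF_main u w hu
  have hL := mh_lhs u w T hT
  have hx1 := mh_root u w hu hw x y hxy hxy'
  have hy1 := mh_root u w hu hw y x (by rw [add_comm]; exact hxy) (by rw [mul_comm]; exact hxy')
  have hu1 : ‖(u : ℂ)‖ < 1 := by
    rw [Complex.norm_real]; exact lt_trans hu (by norm_num)
  obtain ⟨Su, hSu, hSu'⟩ := mhP_exists u hu1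
  obtain ⟨Sx, hSx, hSx'⟩ := mhP_exists x hx1
  obtain ⟨Sy, hSy, hSy'⟩ := mhP_exists y hy1
  have hR : HasSum (fun n : ℕ => ((tval (n + 2) : ℂ) / (n + 2)) *
          ((u : ℂ) ^ (n + 2) - x ^ (n + 2) - y ^ (n + 2))) (Su - Sx - Sy) := by
    simpa only [mul_sub] using (hSu.sub hSx).sub hSy
  refine ⟨hL.summable, hR.summable, ?_⟩
  rw [hL.tsum_eq, hR.tsum_eq]
  have hE := ((hSu'.sub hSx').sub hSy').cexp
  have hP : HasProd (fun m => ((1 + mhg u w m : ℝ) : ℂ)) (T : ℂ) :=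
    hprod.map Complex.ofRealHom Complex.continuous_ofReal
  have hfun : (fun m => ((1 + mhg u w m : ℝ) : ℂ)) = (Complex.exp ∘ fun m : ℕ =>
      (-Complex.log (1 - u / ((2 * m + 1 : ℕ) : ℂ)) - u / ((2 * m + 1 : ℕ) : ℂ)) -
      (-Complex.log (1 - x / ((2 * m + 1 : ℕ) : ℂ)) - x / ((2 * m + 1 : ℕ) : ℂ)) -
      (-Complex.log (1 - y / ((2 * m + 1 : ℕ) : ℂ)) - y / ((2 * m + 1 : ℕ) : ℂ))) := by
    funext m
    have hM : (1 : ℝ) ≤ ((2 * m + 1 : ℕ) : ℝ) := by exact_mod_cast Nat.le_add_left 1 (2 * m)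
    have hM0 : ((2 * m + 1 : ℕ) : ℂ) ≠ 0 := by exact_mod_cast Nat.succ_ne_zero (2 * m)
    have hMn : (1 : ℝ) ≤ ‖((2 * m + 1 : ℕ) : ℂ)‖ := by rw [Complex.norm_natCast]; exact hM
    simp only [Function.comp_apply, mhg]
    push_cast only [Complex.ofReal_add, Complex.ofReal_one, Complex.ofReal_div, Complex.ofReal_mul,
      Complex.ofReal_sub, Complex.ofReal_natCast]
    generalize ((2 * m + 1 : ℕ) : ℂ) = M at *
    have hne : ∀ z : ℂ, ‖z‖ < 1 → M - z ≠ 0 := by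
      intro z hz h
      rw [sub_eq_zero] at h
      rw [h] at hMn
      linarith
    have hne' : ∀ z : ℂ, ‖z‖ < 1 → 1 - z / M ≠ 0 := by
      intro z hz h
      apply hne z hz
      field_simp at h
      simpa using h
    have harg : (-Complex.log (1 - u / M) - u / M) - (-Complex.log (1 - x / M) - x / M) -
        (-Complex.log (1 - y / M) - y / M) =
        Complex.log (1 - x / M) + Complex.log (1 - y / M) - Complex.log (1 - u / M) := by
      rw [← hxy]; ring
    rw [harg, Complex.exp_sub, Complex.exp_add, Complex.exp_log (hne' _ hx1),
      Complex.exp_log (hne' _ hy1), Complex.exp_log (hne' _ hu1)]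
    have hu0 := hne _ hu1
    have hu0' := hne' _ hu1
    rw [eq_div_iff hu0', ← hxy']
    have : 1 - (u : ℂ) / M = (M - u) / M := by field_simp
    rw [this]
    field_simp
    rw [← hxy]
    ring
  rw [hfun] at hP
  rw [← hP.unique hE]
  simp
end

section
/- There exists δ > 0 such that for all real u, w with |u|, |w| < δ, 1 + ∑_{k ≥ 2n, n ≥ 1} G_0^*(k,n,n) u^{k−2n} w^n = exp( ∑_{n ≥ 2} (t(n)/n)((x*)^n + (y*)^n − u^n) ), where x* and y* are the two (possibly complex) roots of X² − uX − w = 0 (so x* + y* = u and x*y* = −w; the quantity (x*)^n + (y*)^n is real), and both series converge absolutely. -/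
open scoped BigOperators

open Filter Topology

lemma list_len_tsum {α : Type*} (g : α → ENNReal) (n : ℕ) :
    (∑' L : List α, if L.length = n then (L.map g).prod else 0) = (∑' a, g a) ^ n := by
  induction n with
  | zero =>
    rw [tsum_eq_single []]
    · simp
    · intro L hL
      simp [hL]
  | succ n ih =>
    have hinj : Function.Injective (fun p : α × List α => p.1 :: p.2) := by
      rintro ⟨a, l⟩ ⟨b, m⟩ h
      simpa using h
    rw [← hinj.tsum_eq]
    · rw [ENNReal.tsum_prod']
      simp only [List.length_cons, add_left_inj, List.map_cons, List.prod_cons]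
      have : ∀ a : α, (∑' l : List α, if l.length = n then g a * (l.map g).prod else 0)
          = g a * (∑' a, g a) ^ n := by
        intro a
        rw [← ih, ← ENNReal.tsum_mul_left]
        congr 1; ext l; split_ifs <;> simp
      simp only [this]
      rw [ENNReal.tsum_mul_right, pow_succ']
    · intro L hL
      cases L with
      | nil => simp at hL
      | cons a l => exact ⟨(a, l), rfl⟩

lemma list_summable {α : Type*} (f : α → ℝ) (hf : Summable fun a => ‖f a‖)
    (h1 : ∑' a, ‖f a‖ < 1) : Summable (fun L : List α => ‖(L.map f).prod‖) := by
  have key : (∑' L : List α, (L.map (fun a => ENNReal.ofReal ‖f a‖)).prod) ≠ ⊤ := by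
    have h2 : (∑' L : List α, (L.map (fun a => ENNReal.ofReal ‖f a‖)).prod)
        = ∑' L : List α, ∑' n : ℕ, if L.length = n then
          (L.map (fun a => ENNReal.ofReal ‖f a‖)).prod else 0 := by
      congr 1; ext L
      rw [tsum_eq_single L.length]
      · simp
      · intro n hn; simp [hn.symm]
    rw [h2, ENNReal.tsum_comm]
    simp only [list_len_tsum]
    rw [ENNReal.tsum_geometric, ← ENNReal.ofReal_tsum_of_nonneg (fun _ => norm_nonneg _) hf]
    simp only [ne_eq, ENNReal.inv_eq_top]
    rw [tsub_eq_zero_iff_le, not_le]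
    exact ENNReal.ofReal_lt_one.2 h1
  have := ENNReal.summable_toReal key
  refine this.congr fun L => ?_
  induction L with
  | nil => simp
  | cons a l ih =>
    simp only [List.map_cons, List.prod_cons, ENNReal.toReal_mul, norm_mul, ih]
    rw [ENNReal.toReal_ofReal (norm_nonneg _)]

/-- sorted condition -/
def srt (L : List (ℕ × ℕ)) : Prop := L.Pairwise (fun p q => q.2 ≤ p.2)

open Classical in
noncomputable def gN (f : ℕ × ℕ → ℝ) (N : ℕ) (L : List (ℕ × ℕ)) : ℝ :=
  if srt L ∧ ∀ p ∈ L, p.2 < N then (L.map f).prod else 0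

open Classical in
noncomputable def gI (f : ℕ × ℕ → ℝ) (L : List (ℕ × ℕ)) : ℝ :=
  if srt L then (L.map f).prod else 0

lemma gN_le (f : ℕ × ℕ → ℝ) (N : ℕ) (L) : ‖gN f N L‖ ≤ ‖(L.map f).prod‖ := by
  unfold gN; split_ifs
  · rfl
  · simp

lemma gI_le (f : ℕ × ℕ → ℝ) (L) : ‖gI f L‖ ≤ ‖(L.map f).prod‖ := by
  unfold gI; split_ifs
  · rfl
  · simp

lemma gN_diff_cons (f : ℕ × ℕ → ℝ) (N : ℕ) (a : ℕ) (l : List (ℕ × ℕ)) :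
    gN f (N + 1) ((a, N) :: l) - gN f N ((a, N) :: l) = f (a, N) * gN f (N + 1) l := by
  have h1 : gN f N ((a, N) :: l) = 0 := by simp [gN]
  rw [h1, sub_zero]
  unfold gN srt
  by_cases h : List.Pairwise (fun p q : ℕ × ℕ => q.2 ≤ p.2) l ∧ ∀ p ∈ l, p.2 < N + 1
  · rw [if_pos h, if_pos]
    · simp
    · refine ⟨List.pairwise_cons.2 ⟨fun p hp => Nat.lt_succ_iff.1 (h.2 p hp), h.1⟩, ?_⟩
      intro p hp
      rcases List.mem_cons.1 hp with rfl | hp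
      · simp
      · exact h.2 p hp
  · rw [if_neg h, if_neg, mul_zero]
    rintro ⟨h1, h2⟩
    exact h ⟨(List.pairwise_cons.1 h1).2, fun p hp => h2 p (List.mem_cons_of_mem _ hp)⟩

lemma gN_diff_supp (f : ℕ × ℕ → ℝ) (N : ℕ) (L : List (ℕ × ℕ))
    (h : gN f (N + 1) L - gN f N L ≠ 0) : ∃ a l, L = (a, N) :: l := by
  cases L with
  | nil => exact absurd (by simp [gN, srt]) h
  | cons p l =>
    obtain ⟨a, j⟩ := p
    by_cases hj : j = N
    · exact ⟨a, l, by rw [hj]⟩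
    · exfalso
      apply h
      rw [sub_eq_zero]
      unfold gN
      congr 1
      simp only [eq_iff_iff]
      refine and_congr_right fun hs => ⟨fun h2 => ?_, fun h2 p hp => (h2 p hp).trans (by omega)⟩
      have := h2 (a, j) (by simp)
      have hjN : j < N := by simp at this; omega
      intro p hp
      rcases List.mem_cons.1 hp with rfl | hp
      · exact hjN
      · exact ((List.pairwise_cons.1 hs).1 p hp).trans_lt hjN

lemma gN_rec (f : ℕ × ℕ → ℝ) (hf : Summable fun a => ‖f a‖)
    (h1 : ∑' a, ‖f a‖ < 1) (N : ℕ) :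
    (∑' L, gN f (N + 1) L) * (1 - ∑' a, f (a, N)) = ∑' L, gN f N L := by
  have hs : ∀ N, Summable (fun L => ‖gN f N L‖) := fun N =>
    Summable.of_nonneg_of_le (fun _ => norm_nonneg _) (gN_le f N) (list_summable f hf h1)
  have hinj : Function.Injective (fun p : ℕ × List (ℕ × ℕ) => (p.1, N) :: p.2) := by
    rintro ⟨a, l⟩ ⟨b, m⟩ h
    simpa using h
  have e1 := (hs (N + 1)).of_norm.tsum_sub (hs N).of_norm
  rw [← hinj.tsum_eq] at e1
  · simp only [gN_diff_cons] at e1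
    have hfN : Summable fun a => ‖f (a, N)‖ :=
      hf.comp_injective (i := fun a : ℕ => (a, N)) (fun a b h => by simpa using h)
    have e2 := tsum_mul_tsum_of_summable_norm hfN (hs (N + 1))
    rw [← e2] at e1
    linarith
  · intro L hL
    obtain ⟨a, l, rfl⟩ := gN_diff_supp f N L hL
    exact ⟨(a, l), rfl⟩

lemma gN_prod (f : ℕ × ℕ → ℝ) (hf : Summable fun a => ‖f a‖)
    (h1 : ∑' a, ‖f a‖ < 1) (N : ℕ) :
    (∑' L, gN f N L) * ∏ j ∈ Finset.range N, (1 - ∑' a, f (a, j)) = 1 := by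
  induction N with
  | zero =>
    rw [tsum_eq_single []]
    · simp [gN, srt]
    · intro L hL
      cases L with
      | nil => simp at hL
      | cons p l =>
        unfold gN
        rw [if_neg]
        rintro ⟨_, h⟩
        exact absurd (h p (by simp)) (by simp)
  | succ N ih =>
    rw [Finset.prod_range_succ, mul_comm (∏ j ∈ _, _), ← mul_assoc, gN_rec f hf h1, ih]

lemma gN_tendsto (f : ℕ × ℕ → ℝ) (hf : Summable fun a => ‖f a‖)
    (h1 : ∑' a, ‖f a‖ < 1) :
    Tendsto (fun N => ∑' L, gN f N L) atTop (𝓝 (∑' L, gI f L)) := by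
  refine tendsto_tsum_of_dominated_convergence (list_summable f hf h1) ?_
    (Eventually.of_forall fun N L => gN_le f N L)
  intro L
  have : ∀ᶠ N in atTop, ∀ p ∈ L, p.2 < N := by
    induction L with
    | nil => simp
    | cons q l ih =>
      filter_upwards [ih, eventually_gt_atTop q.2] with N h1 h2
      intro p hp
      rcases List.mem_cons.1 hp with rfl | hp
      · exact h2
      · exact h1 p hp
  refine tendsto_const_nhds.congr' ?_
  filter_upwards [this] with N hN
  unfold gI gN
  by_cases h : srt L
  · rw [if_pos h, if_pos ⟨h, hN⟩]
  · rw [if_neg h, if_neg (fun h' => h h'.1)]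

noncomputable def fuw (u w : ℝ) (p : ℕ × ℕ) : ℝ :=
  w * u ^ p.1 * ((2 * (p.2 : ℝ) + 1) ^ (p.1 + 2))⁻¹

def mkL (x : Σ A : List ℕ, (Fin A.length → ℕ)) : List (ℕ × ℕ) :=
  List.ofFn (fun i => (x.1.get i, x.2 i))

lemma mkL_fst (x) : (mkL x).map Prod.fst = x.1 := by
  unfold mkL
  rw [List.map_ofFn]
  exact List.ofFn_get x.1

lemma mkL_bij : Function.Bijective mkL := by
  constructor
  · rintro ⟨A, j⟩ ⟨B, k⟩ h
    have h1 := mkL_fst ⟨A, j⟩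
    rw [h, mkL_fst] at h1
    simp only at h1
    subst h1
    simp only [mkL] at h
    have := List.ofFn_injective h
    congr 1
    funext i
    exact (Prod.ext_iff.1 (congrFun this i)).2
  · intro L
    refine ⟨⟨L.map Prod.fst, fun i => (L.get (i.cast (by simp))).2⟩, ?_⟩
    apply List.ext_get
    · simp [mkL]
    · intro n h1 h2
      simp [mkL]

lemma multTStar_cast (K : List ℕ) (n : ℕ) (hn : n = K.length) :
    multTStar K = ∑' m : Fin n → ℕ,
    if (∀ i, Odd (m i)) ∧ (∀ i j : Fin n, i < j → m j ≤ m i) then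
      ∏ i, ((m i : ℝ) ^ K.get (i.cast hn))⁻¹
    else 0 := by
  subst hn; rfl

lemma multTStar_odd (A : List ℕ) :
    multTStar (A.map (· + 2)) = ∑' j : Fin A.length → ℕ,
      if (∀ a b : Fin A.length, a < b → j b ≤ j a) then
        ∏ i, ((2 * (j i : ℝ) + 1) ^ (A.get i + 2))⁻¹ else 0 := by
  rw [multTStar_cast _ A.length (by simp)]
  have hinj : Function.Injective (fun (j : Fin A.length → ℕ) (i : Fin A.length) => 2 * j i + 1) := by
    intro j k h
    funext i
    have := congrFun h i
    simp only at this
    omega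
  rw [← hinj.tsum_eq]
  · congr 1; ext j
    have h1 : ∀ i, Odd (2 * j i + 1) := fun i => ⟨j i, rfl⟩
    simp only [h1, implies_true, true_and]
    congr 1
    · simp
    · simp
  · intro m hm
    have hodd : ∀ i, Odd (m i) := by
      by_contra h
      simp [h] at hm
    choose j hj using hodd
    exact ⟨j, funext fun i => (hj i).symm⟩

lemma gI_mkL (u w : ℝ) (A : List ℕ) (j : Fin A.length → ℕ) :
    gI (fuw u w) (mkL ⟨A, j⟩) = u ^ A.sum * w ^ A.length *
      (if (∀ a b : Fin A.length, a < b → j b ≤ j a) then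
        ∏ i, ((2 * (j i : ℝ) + 1) ^ (A.get i + 2))⁻¹ else 0) := by
  unfold gI srt mkL
  simp only [List.pairwise_ofFn]
  by_cases h : ∀ a b : Fin A.length, a < b → j b ≤ j a
  · rw [if_pos h, if_pos h, List.map_ofFn, List.prod_ofFn]
    simp only [Function.comp, fuw]
    rw [Finset.prod_mul_distrib, Finset.prod_mul_distrib, Finset.prod_pow_eq_pow_sum]
    have : ∑ i, A.get i = A.sum := by
      conv_rhs => rw [← List.ofFn_get A]
      rw [List.sum_ofFn]
    rw [this]
    simp [mul_comm]
  · rw [if_neg h, if_neg h, mul_zero]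

lemma hsum_lists (u w : ℝ) (hs : Summable (gI (fuw u w))) :
    HasSum (fun A : List ℕ => u ^ A.sum * w ^ A.length * multTStar (A.map (· + 2)))
      (∑' L, gI (fuw u w) L) := by
  have h1 : HasSum (fun x => gI (fuw u w) (mkL x)) (∑' L, gI (fuw u w) L) :=
    (Equiv.ofBijective mkL mkL_bij).hasSum_iff.2 hs.hasSum
  have h2 := HasSum.sigma h1 (fun A => (h1.summable.sigma_factor A).hasSum)
  have h3 : ∀ A : List ℕ, (∑' j : Fin A.length → ℕ, gI (fuw u w) (mkL ⟨A, j⟩))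
      = u ^ A.sum * w ^ A.length * multTStar (A.map (· + 2)) := by
    intro A
    rw [multTStar_odd, ← tsum_mul_left]
    simp only [gI_mkL]
  simpa only [h3] using h2

lemma G0_eq (p q : ℕ) : G0hStar (p + 2 * q + 2) (q + 1) (q + 1) =
    ∑' A : List ℕ, if A.sum = p ∧ A.length = q + 1 then multTStar (A.map (· + 2)) else 0 := by
  unfold G0hStar
  have hinj : Function.Injective (List.map (fun x : ℕ => x + 2)) :=
    List.map_injective_iff.2 (fun a b h => by simpa using h)
  rw [← hinj.tsum_eq]
  · congr 1; ext A
    have hsum : (A.map (· + 2)).sum = A.sum + 2 * A.length := by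
      induction A with
      | nil => simp
      | cons a l ih => simp [ih]; ring
    congr 1
    rw [hsum, List.length_map, eq_iff_iff]
    constructor
    · rintro ⟨_, h2, h3, _⟩
      exact ⟨by omega, h3⟩
    · rintro ⟨h2, h3⟩
      refine ⟨⟨by simp, ?_⟩, by omega, h3, ?_⟩
      · cases A with
        | nil => simp at h3
        | cons a l => simp
      · rw [← h3, ← List.length_map (as := A) (f := (· + 2)), List.countP_eq_length]
        simp
  · intro K hK
    have : ∀ i ∈ K, 2 ≤ i := by
      by_contra h
      apply hK
      simp only
      rw [if_neg]
      rintro ⟨_, _, h3, h4⟩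
      rw [← h3, List.countP_eq_length] at h4
      exact h (by simpa using h4)
    refine ⟨K.map (· - 2), ?_⟩
    rw [List.map_map]
    conv_rhs => rw [← List.map_id K]
    apply List.map_congr_left
    intro i hi
    have := this i hi
    simp; omega

lemma hsum_G (u w : ℝ) (hs : Summable (gI (fuw u w))) :
    HasSum (fun p : ℕ × ℕ =>
        G0hStar (p.1 + 2 * p.2 + 2) (p.2 + 1) (p.2 + 1) * u ^ p.1 * w ^ (p.2 + 1))
      ((∑' L, gI (fuw u w) L) - 1) := by
  have h0 := hsum_lists u w hs
  have h1 := h0.update [] 0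
  have hone : multTStar [] = 1 := by
    unfold multTStar
    rw [tsum_eq_single (fun i => i.elim0)]
    · simp
    · intro b hb
      exact absurd (funext fun i => i.elim0) hb
  have h2 := h1.tsum_fiberwise (fun A : List ℕ => (A.sum, A.length - 1))
  simp only [List.map_nil, List.sum_nil, List.length_nil, pow_zero, hone] at h2
  have e : (0 - 1 * 1 * 1 + ∑' L, gI (fuw u w) L) = (∑' L, gI (fuw u w) L) - 1 := by ring
  rw [e] at h2
  suffices hh : (fun p : ℕ × ℕ =>
        G0hStar (p.1 + 2 * p.2 + 2) (p.2 + 1) (p.2 + 1) * u ^ p.1 * w ^ (p.2 + 1)) = _ by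
    rw [hh]; exact h2
  funext ⟨p, q⟩
  rw [G0_eq, ← tsum_mul_right, ← tsum_mul_right, tsum_subtype]
  congr 1; ext A
  simp only [Set.indicator, Set.mem_preimage, Set.mem_singleton_iff, Prod.mk.injEq]
  cases A with
  | nil => simp
  | cons a l =>
    rw [Function.update_of_ne (by simp)]
    simp only [List.length_cons, Nat.add_sub_cancel, Nat.add_right_cancel_iff]
    by_cases h : (a :: l).sum = p ∧ l.length = q
    · rw [if_pos h, if_pos h, h.1, h.2]; ring
    · rw [if_neg h, if_neg h]; ring

lemma odd_sq_summable : Summable (fun j : ℕ => ((2 * (j : ℝ) + 1) ^ 2)⁻¹) := by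
  have h := hasSum_zeta_two.summable.comp_injective (i := fun j : ℕ => 2 * j + 1)
    (fun a b h => by simpa using h)
  refine h.congr fun j => ?_
  simp

lemma odd_sq_tsum : ∑' j : ℕ, ((2 * (j : ℝ) + 1) ^ 2)⁻¹ ≤ 3 := by
  have h1 : ∑' j : ℕ, ((2 * (j : ℝ) + 1) ^ 2)⁻¹ ≤ ∑' n : ℕ, (1 : ℝ) / (n : ℝ) ^ 2 := by
    refine Summable.tsum_le_tsum_of_inj (fun j : ℕ => 2 * j + 1) (fun a b h => by simpa using h)
      (fun c _ => by positivity) (fun j => by simp) odd_sq_summable hasSum_zeta_two.summable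
  rw [hasSum_zeta_two.tsum_eq] at h1
  have := Real.pi_lt_four
  nlinarith [Real.pi_pos]

lemma fuw_bound (u w : ℝ) (hu : |u| < 1 / 8) (hw : |w| < 1 / 8) (p : ℕ × ℕ) :
    ‖fuw u w p‖ ≤ (1 / 8 * (1 / 8) ^ p.1) * ((2 * (p.2 : ℝ) + 1) ^ 2)⁻¹ := by
  unfold fuw
  have h0 : (1 : ℝ) ≤ 2 * (p.2 : ℝ) + 1 := by linarith [Nat.cast_nonneg (α := ℝ) p.2]
  rw [norm_mul, norm_mul, norm_pow, norm_inv, norm_pow, Real.norm_eq_abs, Real.norm_eq_abs,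
    Real.norm_eq_abs, abs_of_pos (by linarith : 0 < 2 * (p.2 : ℝ) + 1)]
  gcongr
  omega

lemma fuw_summable (u w : ℝ) (hu : |u| < 1 / 8) (hw : |w| < 1 / 8) :
    Summable (fun p => ‖fuw u w p‖) ∧ ∑' p, ‖fuw u w p‖ < 1 := by
  have hg : HasSum (fun a : ℕ => (1 / 8 : ℝ) * (1 / 8) ^ a) (1 / 7) := by
    have := (hasSum_geometric_of_lt_one (by norm_num : (0 : ℝ) ≤ 1 / 8) (by norm_num)).mul_left (1 / 8)
    have e : (1 / 8 : ℝ) * (1 - 1 / 8)⁻¹ = 1 / 7 := by norm_num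
    rw [e] at this
    exact this
  have hb : Summable (fun p : ℕ × ℕ => (1 / 8 * (1 / 8 : ℝ) ^ p.1) * ((2 * (p.2 : ℝ) + 1) ^ 2)⁻¹) :=
    hg.summable.mul_of_nonneg odd_sq_summable (fun _ => by positivity) (fun _ => by positivity)
  have hs := Summable.of_nonneg_of_le (fun _ => norm_nonneg _) (fuw_bound u w hu hw) hb
  refine ⟨hs, ?_⟩
  have h1 := hs.tsum_le_tsum (fuw_bound u w hu hw) hb
  rw [← hg.summable.tsum_mul_tsum odd_sq_summable hb, hg.tsum_eq] at h1
  linarith [odd_sq_tsum]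

lemma root_bound (u w : ℝ) (hu : |u| < 1 / 8) (hw : |w| < 1 / 8) (x y : ℂ)
    (h1 : x + y = u) (h2 : x * y = -w) : ‖x‖ < 1 / 2 := by
  have h3 : x * x = u * x + w := by
    have : y = u - x := by rw [← h1]; ring
    rw [this] at h2
    linear_combination -h2
  have h4 : ‖x‖ * ‖x‖ ≤ |u| * ‖x‖ + |w| := by
    rw [← norm_mul, h3]
    refine (norm_add_le _ _).trans ?_
    simp
  by_contra! h
  nlinarith [norm_nonneg x, abs_nonneg u]

lemma c_val (u w : ℝ) (hu : |u| < 1 / 8) (x y : ℂ)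
    (h1 : x + y = u) (h2 : x * y = -w) (j : ℕ) :
    ((1 - ∑' a, fuw u w (a, j) : ℝ) : ℂ) =
      (1 - x / (2 * j + 1)) * (1 - y / (2 * j + 1)) / (1 - u / (2 * j + 1)) := by
  have h0 : (1 : ℝ) ≤ 2 * (j : ℝ) + 1 := by linarith [Nat.cast_nonneg (α := ℝ) j]
  have habs := abs_lt.1 hu
  set m : ℝ := 2 * (j : ℝ) + 1 with hm
  have hum : |u / m| < 1 := by
    rw [abs_div, abs_of_pos (by linarith : 0 < m), div_lt_one (by linarith)]; linarith
  have hg := ((hasSum_geometric_of_abs_lt_one hum).mul_left (w / m ^ 2)).tsum_eq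
  have : ∑' a, fuw u w (a, j) = w / m ^ 2 * (1 - u / m)⁻¹ := by
    rw [← hg]
    congr 1; ext a
    simp only [fuw, ← hm]
    rw [pow_add, div_pow]
    field_simp
  rw [this]
  have hm' : (2 * (j : ℂ) + 1) = (m : ℂ) := by rw [hm]; push_cast; ring
  rw [hm']
  have hm0 : (m : ℂ) ≠ 0 := by exact_mod_cast (by linarith : m ≠ 0)
  have hmu : (m : ℂ) - u ≠ 0 := by exact_mod_cast (by linarith : m - u ≠ 0)
  have hmu1 : 1 - (u : ℂ) / m ≠ 0 := by
    rw [one_sub_div hm0]; exact div_ne_zero hmu hm0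
  push_cast
  rw [eq_div_iff hmu1, sub_mul, mul_assoc, inv_mul_cancel₀ hmu1]
  field_simp
  linear_combination ((m : ℂ)) * h1 - h2

lemma log_sum (x y u : ℂ) (hx : ‖x‖ < 1) (hy : ‖y‖ < 1) (hu : ‖u‖ < 1) (h : x + y = u) :
    HasSum (fun n : ℕ => (x ^ (n + 2) + y ^ (n + 2) - u ^ (n + 2)) / (n + 2 : ℂ))
      (-Complex.log (1 - x) + -Complex.log (1 - y) - -Complex.log (1 - u)) := by
  have h1 := ((Complex.hasSum_taylorSeries_neg_log hx).add
    (Complex.hasSum_taylorSeries_neg_log hy)).sub (Complex.hasSum_taylorSeries_neg_log hu)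
  rw [← hasSum_nat_add_iff' 2] at h1
  simp only [Finset.sum_range_succ, Finset.sum_range_zero] at h1
  have e : ∀ L : ℂ, L - (0 + (x ^ 0 / ((0 : ℕ) : ℂ) + y ^ 0 / ((0 : ℕ) : ℂ) - u ^ 0 / ((0 : ℕ) : ℂ)) + (x ^ 1 / ((1 : ℕ) : ℂ) + y ^ 1 / ((1 : ℕ) : ℂ) - u ^ 1 / ((1 : ℕ) : ℂ))) = L := by
    intro L
    simp [h]
  rw [e] at h1
  have e2 : (fun n : ℕ => (x ^ (n + 2) + y ^ (n + 2) - u ^ (n + 2)) / (n + 2 : ℂ)) = (fun n : ℕ =>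
      x ^ (n + 2) / ((n + 2 : ℕ) : ℂ) + y ^ (n + 2) / ((n + 2 : ℕ) : ℂ) - u ^ (n + 2) / ((n + 2 : ℕ) : ℂ)) := by
    ext n
    push_cast
    ring
  rw [e2]; exact h1

lemma exp_log_sum (x y u : ℂ) (hx : ‖x‖ < 1) (hy : ‖y‖ < 1) (hu : ‖u‖ < 1) :
    Complex.exp (-Complex.log (1 - x) + -Complex.log (1 - y) - -Complex.log (1 - u)) *
      ((1 - x) * (1 - y) / (1 - u)) = 1 := by
  have key : ∀ z : ℂ, ‖z‖ < 1 → 1 - z ≠ 0 := by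
    intro z hz h
    rw [sub_eq_zero] at h
    rw [← h] at hz
    simp at hz
  have a := key x hx
  have b := key y hy
  have c := key u hu
  rw [Complex.exp_sub, Complex.exp_add, Complex.exp_neg, Complex.exp_neg, Complex.exp_neg,
    Complex.exp_log a, Complex.exp_log b, Complex.exp_log c]
  field_simp

noncomputable def tm (x y u : ℂ) (p : ℕ × ℕ) : ℂ :=
  (x ^ (p.1 + 2) + y ^ (p.1 + 2) - u ^ (p.1 + 2)) / (p.1 + 2 : ℂ) / (2 * (p.2 : ℂ) + 1) ^ (p.1 + 2)

lemma tm_summable (x y u : ℂ) (hx : ‖x‖ ≤ 1 / 2) (hy : ‖y‖ ≤ 1 / 2) (hu : ‖u‖ ≤ 1 / 2) :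
    Summable (tm x y u) := by
  have hg : Summable (fun a : ℕ => (3 : ℝ) * (1 / 2) ^ a) :=
    (summable_geometric_of_lt_one (by norm_num) (by norm_num)).mul_left 3
  have hb : Summable (fun p : ℕ × ℕ => ((3 : ℝ) * (1 / 2) ^ p.1) * ((2 * (p.2 : ℝ) + 1) ^ 2)⁻¹) :=
    hg.mul_of_nonneg odd_sq_summable (fun _ => by positivity) (fun _ => by positivity)
  refine Summable.of_norm_bounded hb ?_
  rintro ⟨n, j⟩
  have h0 : (1 : ℝ) ≤ 2 * (j : ℝ) + 1 := by linarith [Nat.cast_nonneg (α := ℝ) j]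
  have hm : ‖(2 * (j : ℂ) + 1)‖ = 2 * (j : ℝ) + 1 := by
    have : (2 * (j : ℂ) + 1) = ((2 * j + 1 : ℕ) : ℂ) := by push_cast; ring
    rw [this, Complex.norm_natCast]; push_cast; ring
  have hn : ‖(n + 2 : ℂ)‖ = (n : ℝ) + 2 := by
    have : (n + 2 : ℂ) = ((n + 2 : ℕ) : ℂ) := by push_cast; ring
    rw [this, Complex.norm_natCast]; push_cast; ring
  have hz : ∀ z : ℂ, ‖z‖ ≤ 1 / 2 → ‖z ^ (n + 2)‖ ≤ (1 / 2) ^ n := by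
    intro z hz
    rw [norm_pow]
    calc ‖z‖ ^ (n + 2) ≤ (1 / 2) ^ (n + 2) := by gcongr
      _ ≤ (1 / 2) ^ n := pow_le_pow_of_le_one (by norm_num) (by norm_num) (by omega)
  simp only [tm]
  rw [norm_div, norm_div, norm_pow, hm, hn, div_eq_mul_inv _ ((2 * (j : ℝ) + 1) ^ (n + 2))]
  have e1 : ‖x ^ (n + 2) + y ^ (n + 2) - u ^ (n + 2)‖ ≤ 3 * (1 / 2) ^ n := by
    refine (norm_sub_le _ _).trans ?_
    have := norm_add_le (x ^ (n + 2)) (y ^ (n + 2))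
    linarith [hz x hx, hz y hy, hz u hu]
  have e2 : ‖x ^ (n + 2) + y ^ (n + 2) - u ^ (n + 2)‖ / ((n : ℝ) + 2) ≤ 3 * (1 / 2) ^ n := by
    refine (div_le_self (norm_nonneg _) ?_).trans e1
    linarith [Nat.cast_nonneg (α := ℝ) n]
  gcongr
  omega

lemma tm_row (x y u : ℂ) (n : ℕ) :
    ∑' j, tm x y u (n, j) = ((tval (n + 2) : ℂ) / (n + 2)) *
          (x ^ (n + 2) + y ^ (n + 2) - u ^ (n + 2)) := by
  unfold tval
  rw [Complex.ofReal_tsum, ← tsum_div_const, ← tsum_mul_right]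
  congr 1; ext j
  simp only [tm]
  push_cast
  ring

lemma tm_col (x y u : ℂ) (hx : ‖x‖ < 1) (hy : ‖y‖ < 1) (hu : ‖u‖ < 1) (h : x + y = u) (j : ℕ) :
    Complex.exp (∑' n, tm x y u (n, j)) *
      ((1 - x / (2 * j + 1)) * (1 - y / (2 * j + 1)) / (1 - u / (2 * j + 1))) = 1 := by
  have hm : ‖(2 * (j : ℂ) + 1)‖ = 2 * (j : ℝ) + 1 := by
    have : (2 * (j : ℂ) + 1) = ((2 * j + 1 : ℕ) : ℂ) := by push_cast; ring
    rw [this, Complex.norm_natCast]; push_cast; ring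
  have h0 : (1 : ℝ) ≤ 2 * (j : ℝ) + 1 := by linarith [Nat.cast_nonneg (α := ℝ) j]
  have hz : ∀ z : ℂ, ‖z‖ < 1 → ‖z / (2 * j + 1)‖ < 1 := by
    intro z hz
    rw [norm_div, hm]
    exact (div_le_self (norm_nonneg _) h0).trans_lt hz
  have := log_sum _ _ _ (hz x hx) (hz y hy) (hz u hu) (by rw [← h]; ring)
  have h5 := exp_log_sum _ _ _ (hz x hx) (hz y hy) (hz u hu)
  rw [← this.tsum_eq] at h5
  have e : (fun n => tm x y u (n, j)) = fun n : ℕ => ((x / (2 * (j : ℂ) + 1)) ^ (n + 2) +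
      (y / (2 * (j : ℂ) + 1)) ^ (n + 2) - (u / (2 * (j : ℂ) + 1)) ^ (n + 2)) / ((n : ℂ) + 2) := by
    ext n
    simp only [tm, div_pow]
    ring
  rw [e]
  exact h5

/-- Generating function of sums of multiple `t`-star values of maximal height
(Corollary 2.4): `1 + ∑ G₀*(k,n,n) u^(k-2n) w^n = exp(∑_{n≥2} (t(n)/n)((x*)ⁿ + (y*)ⁿ - uⁿ))`
where `x* + y* = u` and `x*y* = -w`. -/
theorem maximal_height_multiple_t_star :
    ∃ δ > (0 : ℝ), ∀ u w : ℝ, |u| < δ → |w| < δ →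
      ∀ xs ys : ℂ, xs + ys = (u : ℂ) → xs * ys = -(w : ℂ) →
        Summable (fun p : ℕ × ℕ =>
        G0hStar (p.1 + 2 * p.2 + 2) (p.2 + 1) (p.2 + 1) * u ^ p.1 * w ^ (p.2 + 1)) ∧
        Summable (fun n : ℕ => ((tval (n + 2) : ℂ) / (n + 2)) *
          (xs ^ (n + 2) + ys ^ (n + 2) - (u : ℂ) ^ (n + 2))) ∧
        ((1 + (∑' p : ℕ × ℕ,
            G0hStar (p.1 + 2 * p.2 + 2) (p.2 + 1) (p.2 + 1) * u ^ p.1 * w ^ (p.2 + 1)) : ℝ) : ℂ)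
          = Complex.exp (∑' n : ℕ, ((tval (n + 2) : ℂ) / (n + 2)) *
              (xs ^ (n + 2) + ys ^ (n + 2) - (u : ℂ) ^ (n + 2))) := by
  refine ⟨1 / 8, by norm_num, fun u w hu hw x y h1 h2 => ?_⟩
  obtain ⟨hf, hlt⟩ := fuw_summable u w hu hw
  have hgI : Summable (gI (fuw u w)) :=
    Summable.of_norm_bounded (list_summable _ hf hlt) (gI_le _)
  have hG := hsum_G u w hgI
  have hx := root_bound u w hu hw x y h1 h2
  have hy := root_bound u w hu hw y x (by rw [add_comm]; exact h1) (by rw [mul_comm]; exact h2)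
  have hu' : ‖(u : ℂ)‖ < 1 / 2 := by
    rw [Complex.norm_real, Real.norm_eq_abs]; linarith
  have hT := tm_summable x y u hx.le hy.le hu'.le
  have hrow := hT.prod
  simp only [tm_row] at hrow
  refine ⟨hG.summable, hrow, ?_⟩
  have hsw : (∑' n : ℕ, ((tval (n + 2) : ℂ) / (n + 2)) *
      (x ^ (n + 2) + y ^ (n + 2) - (u : ℂ) ^ (n + 2))) = ∑' j, ∑' n, tm x y u (n, j) := by
    simp only [← tm_row]
    exact (Summable.tsum_comm (f := fun n j => tm x y u (n, j)) hT).symm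
  rw [hG.tsum_eq, hsw]
  have hcol : Summable (fun j => ∑' n, tm x y u (n, j)) := hT.prod_symm.prod
  have l1 := (Complex.continuous_exp.tendsto _).comp hcol.hasSum.tendsto_sum_nat
  have l2 := (Complex.continuous_ofReal.tendsto _).comp (gN_tendsto _ hf hlt)
  have e : (1 + ((∑' L, gI (fuw u w) L) - 1)) = ∑' L, gI (fuw u w) L := by ring
  rw [e]
  refine tendsto_nhds_unique (l2.congr fun N => ?_) l1
  have p1 := congrArg (fun r : ℝ => (r : ℂ)) (gN_prod _ hf hlt N)
  simp only [Complex.ofReal_mul, Complex.ofReal_prod, Complex.ofReal_one] at p1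
  have p2 : Complex.exp (∑ j ∈ Finset.range N, ∑' n, tm x y u (n, j)) *
      ∏ j ∈ Finset.range N, ((1 - ∑' a, fuw u w (a, j) : ℝ) : ℂ) = 1 := by
    rw [Complex.exp_sum, ← Finset.prod_mul_distrib]
    refine Finset.prod_eq_one fun j _ => ?_
    rw [c_val u w hu x y h1 h2]
    exact tm_col x y u (by linarith) (by linarith) (by linarith) h1 j
  have hne := right_ne_zero_of_mul_eq_one p2
  exact mul_right_cancel₀ hne (p1.trans p2.symm)
end
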